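/- arXiv:2102.05342 — 9 statements merged into one kernel-verified Lean document; each statement's English description precedes it below -/
import Mathlib

section
/- For every natural number k ≥ 1 there exists a function f : ℝ² → ℝ with the following properties: (a) f is convex on ℝ²; (b) f is k times continuously differentiable on ℝ²; (c) f is real analytic on ℝ² \ {(0,0)}; (d) f(0,0) = 0 and f(p) > 0 for every p ≠ (0,0) (so the origin is the unique minimizer); (e) there exist c > 0 and ϑ ∈ (0,1) such that ‖∇f(p)‖ ≥ c·f(p)^ϑ for all p ∈ ℝ² (Łojasiewicz gradient inequality); (f) for every γ₀ ∈ ℝ² \ {(0,0)} there exist T ∈ ℝ with 0 < T < +∞ and a differentiable curve γ : (−∞, T) → ℝ² satisfying γ'(s) = ∇f(γ(s)) for all s, γ(0) = γ₀, ‖γ(s)‖ → +∞ as s → T⁻, γ(s) → (0,0) as s → −∞, and there exists a continuous function α : (−∞, T) → ℝ such that γ(s) = ‖γ(s)‖·(cos α(s), sin α(s)) for all s, with α(s) → −∞ as s → −∞ and α(s) → +∞ as s → T⁻ (the orbit spirals infinitely many times both around the origin and at infinity). -/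
/-!
Identify `ℝ²` with `ℂ` and write `w = r e^{iθ}`. The function is
`f = r^{2M} (1 + ε cos v)` with phase `v = 2θ - 2 log r`, `M = k + 3` and `ε > 0` small. It is
multiplied by `e^{2Mt}` under the similarity scaling by `e^t` and rotating by the angle `t`, so every
estimate is uniform in `r`.

* Regularity: `r^{2M} e^{iv} = w² · twist (M - 1) w` with `twist j w = |w|^{2j} e^{-i log |w|²}`.
  Differentiating `twist (j + 1)` yields `twist j` times a linear form in `w`, also at the origin,
  so `twist j` is of class `C^n` for `n < j` (`contDiff_twist`).
* Convexity: along a line with direction `q`, the second derivative of `r^{2M}` is at least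
  `2M r^{2M-2} |q|²`, while that of the oscillating term is at most
  `ε (4M² + 10M + 2) r^{2M-2} |q|²` in absolute value (`potential_line_convex`).
* Łojasiewicz: `|∇f|` is at least `r^{2M-1}` and `f ≤ 2 r^{2M}`, so the exponent is
  `(2M - 1) / (2M)`.
* Orbits: up to the time change with density `r^{2M-2}`, the gradient flow reads
  `(log r)˙ = 2M (1 + ε cos v) + 2ε sin v`, `θ˙ = -2ε sin v`, so that
  `v˙ = -4M (1 + ε cos v) - 8ε sin v < 0`, and `x = -v` may serve as the parameter. Then
  `dθ/dx = y / (2M φ - 4y)` with `y = ε sin x` and `φ = 1 + ε cos x`. The first-order part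
  `y / (2M φ)` is the derivative of the bounded function `-log φ / (2M)`, and the remainder is at
  least a positive multiple of `sin² x`; hence `θ → ±∞` as `x → ±∞` (`exists_angle`), and
  `log r = θ + x / 2` as well. The original time is a primitive in `x` of a positive density which
  decays exponentially at `+∞` and is bounded below near `-∞`; its inverse function provides the
  orbit, with blow-up in finite time (`exists_reparametrization`).
-/

open Filter Real Set

/-! ### The twisted powers and the potential -/

/-- The function `|w|^{2j} e^{-i log |w|²}`, i.e. the complex power `(|w|²)^{j - i}`; it vanishes at
`w = 0` when `j ≥ 1`. -/
noncomputable def twist (j : ℕ) (w : ℂ) : ℂ :=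
  ((‖w‖ ^ 2 : ℝ) : ℂ) ^ j * Complex.exp (-(Complex.I * ((Real.log (‖w‖ ^ 2) : ℝ) : ℂ)))

/-- The function `|w|^{2M} (1 + ε cos (2 arg w - 2 log |w|))` with `M = n + 3`, written without an
argument function; see `potential_exp` for the polar form. -/
noncomputable def potential (n : ℕ) (ε : ℝ) (w : ℂ) : ℝ :=
  (‖w‖ ^ 2) ^ (n + 3) + ε * (w ^ 2 * twist (n + 2) w).re

lemma norm_twist (j : ℕ) (w : ℂ) : ‖twist j w‖ = ‖w‖ ^ (2 * j) := by
  have h : -(Complex.I * ((Real.log (‖w‖ ^ 2) : ℝ) : ℂ))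
      = ((-Real.log (‖w‖ ^ 2) : ℝ) : ℂ) * Complex.I := by
    push_cast; ring
  rw [twist, norm_mul, h, Complex.norm_exp_ofReal_mul_I, mul_one, norm_pow, Complex.norm_real,
    Real.norm_of_nonneg (by positivity), ← pow_mul]

/-- The formula holds at the origin too, where the derivative is zero because
`‖twist (j + 1) w‖ = ‖w‖ ^ (2 * j + 2)`. -/
lemma hasFDerivAt_twist (j : ℕ) (w : ℂ) :
    HasFDerivAt (twist (j + 1))
      ((innerSL ℝ w).smulRight (2 * ((j : ℂ) + 1 - Complex.I) * twist j w)) w := by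
  by_cases hw : w = 0
  · subst hw
    simp only [map_zero, ContinuousLinearMap.zero_smulRight]
    have h0 : twist (j + 1) 0 = 0 := by simp [twist]
    rw [hasFDerivAt_iff_isLittleO_nhds_zero]
    simp only [zero_add, h0, sub_zero, zero_apply]
    refine Asymptotics.IsLittleO.of_norm_left ?_
    simp only [norm_twist]
    have : (fun h : ℂ => ‖h‖ ^ (2 * (j + 1))) =o[nhds 0] fun h : ℂ => ‖h‖ := by
      have h1 := Asymptotics.isLittleO_pow_id (𝕜 := ℝ) (n := 2 * (j + 1)) (by omega)
      have h2 : Tendsto (fun h : ℂ => ‖h‖) (nhds 0) (nhds 0) := tendsto_norm_zero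
      exact h1.comp_tendsto h2
    exact this.of_norm_right
  · have hpos : (0 : ℝ) < ‖w‖ ^ 2 := by positivity
    have hr : HasFDerivAt (fun w : ℂ => ‖w‖ ^ 2) (2 • innerSL ℝ w) w :=
      (hasStrictFDerivAt_norm_sq w).hasFDerivAt
    have hg : HasDerivAt (fun x : ℝ => (x : ℂ) ^ (j + 1) *
        Complex.exp (-(Complex.I * ((Real.log x : ℝ) : ℂ))))
        (((j : ℂ) + 1 - Complex.I) * twist j w) (‖w‖ ^ 2) := by
      have h1 : HasDerivAt (fun x : ℝ => (x : ℂ)) 1 (‖w‖ ^ 2) := Complex.ofRealCLM.hasDerivAt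
      have h2 : HasDerivAt (fun x : ℝ => ((Real.log x : ℝ) : ℂ)) (((‖w‖ ^ 2)⁻¹ : ℝ) : ℂ)
          (‖w‖ ^ 2) := (Real.hasDerivAt_log hpos.ne').ofReal_comp
      have h3 := (h1.pow (j + 1)).mul (h2.const_mul Complex.I).neg.cexp
      convert! h3 using 1
      have hne : ((‖w‖ : ℝ) : ℂ) ≠ 0 := by simpa using hw
      rw [twist]
      simp only [Nat.add_sub_cancel, Pi.pow_apply, Pi.neg_apply]
      push_cast
      field_simp
      ring
    have := hg.hasFDerivAt.comp w hr
    refine this.congr_fderiv ?_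
    ext
    simp
    ring

lemma contDiff_twist (n : ℕ) : ∀ j, n < j → ContDiff ℝ n (twist j) := by
  induction n with
  | zero =>
    intro j hj
    obtain ⟨j, rfl⟩ := Nat.exists_eq_succ_of_ne_zero hj.ne'
    refine contDiff_zero.2 ?_
    exact continuous_iff_continuousAt.2 fun w => (hasFDerivAt_twist j w).continuousAt
  | succ n ih =>
    intro j hj
    obtain ⟨j, rfl⟩ := Nat.exists_eq_succ_of_ne_zero (by omega : j ≠ 0)
    push_cast
    refine contDiff_succ_iff_hasFDerivAt.2 ⟨_, ?_, hasFDerivAt_twist j⟩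
    exact (innerSL ℝ).contDiff.smulRight (contDiff_const.mul (ih j (by omega)))

lemma contDiff_potential (n : ℕ) (ε : ℝ) : ContDiff ℝ n (potential n ε) := by
  have h := contDiff_twist n (n + 2) (by omega)
  have h1 : ContDiff ℝ n fun w : ℂ => w ^ 2 * twist (n + 2) w :=
    (contDiff_id.pow 2).mul h
  exact ((contDiff_norm_sq ℝ).pow _).add (contDiff_const.mul (Complex.reCLM.contDiff.comp h1))

lemma analyticAt_potential (n : ℕ) (ε : ℝ) {w : ℂ} (hw : w ≠ 0) :
    AnalyticAt ℝ (potential n ε) w := by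
  have hpos : (0 : ℝ) < ‖w‖ ^ 2 := by positivity
  have hr : AnalyticAt ℝ (fun w : ℂ => ‖w‖ ^ 2) w :=
    (contDiff_norm_sq (n := ⊤) ℝ).contDiffAt.analyticAt
  have hof : ∀ g : ℂ → ℝ, AnalyticAt ℝ g w → AnalyticAt ℝ (fun z => (g z : ℂ)) w :=
    fun g hg => (Complex.ofRealCLM.analyticAt _).comp hg
  have hl : AnalyticAt ℝ (fun z : ℂ => Real.log (‖z‖ ^ 2)) w := 
    AnalyticAt.comp (g := Real.log) (analyticAt_log hpos) hr
  have hE : AnalyticAt ℝ (twist (n + 2)) w :=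
    ((hof _ hr).pow _).mul
      (((analyticAt_cexp.restrictScalars (𝕜 := ℝ))).comp
        (analyticAt_const.mul (hof _ hl)).neg)
  have h2 : AnalyticAt ℝ (fun w : ℂ => w ^ 2 * twist (n + 2) w) w := (analyticAt_id.pow 2).mul hE
  exact (hr.pow _).add (analyticAt_const.mul ((Complex.reCLM.analyticAt _).comp h2))

lemma hasFDerivAt_potential (n : ℕ) (ε : ℝ) (w : ℂ) : ∃ φ : ℂ →L[ℝ] ℝ,
    HasFDerivAt (potential n ε) φ w ∧ ∀ q, φ q =
      2 * (n + 3) * (‖w‖ ^ 2) ^ (n + 2) * inner ℝ w q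
      + ε * (2 * w * q * twist (n + 2) w
          + w ^ 2 * (2 * ((n : ℂ) + 2 - Complex.I) * twist (n + 1) w * (inner ℝ w q : ℝ))).re := by
  have hr : HasFDerivAt (fun w : ℂ => ‖w‖ ^ 2) (2 • innerSL ℝ w) w :=
    (hasStrictFDerivAt_norm_sq w).hasFDerivAt
  have h1 := ((hasFDerivAt_id (𝕜 := ℝ) w).pow 2).mul (hasFDerivAt_twist (n + 1) w)
  have h2 := (hr.pow (n + 3)).add
    ((Complex.reCLM.hasFDerivAt.comp w h1).const_mul ε)
  refine ⟨_, h2, fun q => ?_⟩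
  have e1 : (2 : ℕ) • innerSL ℝ w = (2 : ℝ) • innerSL ℝ w := by
    rw [two_smul, two_smul]
  simp [e1]
  ring

/-! ### Convexity -/

lemma hasDerivAt_twist_line (j : ℕ) (p q : ℂ) (t : ℝ) :
    HasDerivAt (fun t : ℝ => twist (j + 1) (p + t * q))
      (2 * ((j : ℂ) + 1 - Complex.I) * twist j (p + t * q) * (inner ℝ (p + t * q) q : ℝ)) t := by
  have hc : HasDerivAt (fun t : ℝ => p + t * q) q t := by
    have := ((Complex.ofRealCLM.hasDerivAt (x := t)).mul_const q).const_add p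
    simpa using this
  have := (hasFDerivAt_twist j (p + t * q)).comp_hasDerivAt t hc
  convert! this using 1
  rw [ContinuousLinearMap.smulRight_apply, innerSL_apply_apply, Complex.real_smul, mul_comm]

/-- The bound on `ε` makes the second derivative of `‖·‖ ^ (2 * (n + 3))` along the line dominate
that of the oscillating term. -/
lemma potential_line_convex (n : ℕ) {ε : ℝ} (hε : 0 ≤ ε)
    (hε' : ε * (4 * (n + 3 : ℝ) ^ 2 + 10 * (n + 3) + 2) ≤ 2 * (n + 3)) (p q : ℂ) :
    ConvexOn ℝ univ (fun t : ℝ => potential n ε (p + t * q)) := by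
  have hc : ∀ t : ℝ, HasDerivAt (fun t : ℝ => p + t * q) q t := fun t => by
    have := ((Complex.ofRealCLM.hasDerivAt (x := t)).mul_const q).const_add p
    simpa using this
  have hσ : ∀ t : ℝ, HasDerivAt (fun t : ℝ => (inner ℝ (p + t * q) q : ℝ)) (‖q‖ ^ 2) t :=
    fun t => by
      have := (hc t).inner ℝ (hasDerivAt_const t q)
      simpa using this
  have hσc : ∀ t : ℝ, HasDerivAt (fun t : ℝ => ((inner ℝ (p + t * q) q : ℝ) : ℂ))
      ((‖q‖ ^ 2 : ℝ) : ℂ) t := fun t => (hσ t).ofReal_comp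
  have hre : ∀ (g : ℝ → ℂ) (g' : ℂ) (t : ℝ), HasDerivAt g g' t →
      HasDerivAt (fun t => (g t).re) g'.re t := fun g g' t h =>
    Complex.reCLM.hasFDerivAt.comp_hasDerivAt t h
  have hE := fun t => hasDerivAt_twist_line (n + 1) p q t
  have hE' := fun t => hasDerivAt_twist_line n p q t
  have hρ := fun t => (hc t).norm_sq
  -- `d2` is `d1` differentiated once more, with the derivative in `d1` as its function.
  have d1 : ∀ t : ℝ, HasDerivAt (fun t : ℝ => potential n ε (p + t * q)) _ t := fun t =>
    ((hρ t).pow (n + 3)).add ((hre _ _ t (((hc t).pow 2).mul (hE t))).const_mul ε)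
  have d2 : ∀ t : ℝ, HasDerivAt _ _ t := fun t =>
    ((((hρ t).pow (n + 2)).const_mul ((n + 3 : ℕ) : ℝ)).mul ((hσ t).const_mul 2)).add
      ((hre _ _ t (((((hc t).pow 1).const_mul ((2 : ℕ) : ℂ)).mul_const q).mul (hE t) |>.add
        (((hc t).pow 2).mul (((hE' t).const_mul (2 * (((n + 1 : ℕ) : ℂ) + 1 - Complex.I))).mul
          (hσc t))))).const_mul ε)
  refine convexOn_of_hasDerivWithinAt2_nonneg convex_univ
    (fun t _ => (d1 t).continuousAt.continuousWithinAt)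
    (fun t _ => (d1 t).hasDerivWithinAt) (fun t _ => (d2 t).hasDerivWithinAt) (fun t _ => ?_)
  set c : ℂ := p + t * q
  set σ : ℝ := inner ℝ c q
  have hnormsub : ∀ x : ℝ, 0 ≤ x → ‖(x : ℂ) - Complex.I‖ ≤ x + 1 := fun x hx => by
    refine (norm_sub_le _ _).trans ?_
    rw [Complex.norm_real, Real.norm_of_nonneg hx, Complex.norm_I]
  have hσle : |σ| ≤ ‖c‖ * ‖q‖ := abs_real_inner_le_norm c q
  -- `ε * z.re` is the contribution of the oscillating term to the second derivative.
  set z : ℂ := 2 * q * q * twist (n + 2) c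
      + 2 * (2 * c * q) * (2 * ((n + 2 : ℝ) - Complex.I) * twist (n + 1) c * σ)
      + c ^ 2 * (2 * ((n + 2 : ℝ) - Complex.I))
        * (2 * ((n + 1 : ℝ) - Complex.I) * twist n c * σ * σ + twist (n + 1) c * (‖q‖ ^ 2 : ℝ))
    with hz
  have hexp : 0 ≤ 2 * (n + 3) * (‖c‖ ^ 2) ^ (n + 2) * ‖q‖ ^ 2
      + 4 * (n + 3) * (n + 2) * (‖c‖ ^ 2) ^ (n + 1) * σ ^ 2 + ε * z.re := by
    have hB : ‖z‖ ≤ (4 * (n + 3 : ℝ) ^ 2 + 10 * (n + 3) + 2) *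
        ((‖c‖ ^ 2) ^ (n + 2) * ‖q‖ ^ 2) := by
      set a := ‖c‖
      set b := ‖q‖
      have ha : 0 ≤ a := norm_nonneg c
      have hb : 0 ≤ b := norm_nonneg q
      have k2 := hnormsub (n + 2) (by positivity)
      have k1 := hnormsub (n + 1) (by positivity)
      have t1 : ‖2 * q * q * twist (n + 2) c‖ ≤ 2 * ((a ^ 2) ^ (n + 2) * b ^ 2) := by
        simp only [norm_mul, norm_twist, Complex.norm_ofNat]
        rw [pow_mul]
        exact le_of_eq (by ring)
      have t2 : ‖2 * (2 * c * q) * (2 * ((n + 2 : ℝ) - Complex.I) * twist (n + 1) c * σ)‖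
          ≤ 8 * (n + 3) * ((a ^ 2) ^ (n + 2) * b ^ 2) := by
        simp only [norm_mul, norm_twist, Complex.norm_ofNat, Complex.norm_real, Real.norm_eq_abs]
        calc 2 * (2 * a * b) * (2 * ‖((n + 2 : ℝ) : ℂ) - Complex.I‖ * a ^ (2 * (n + 1)) * |σ|)
            ≤ 2 * (2 * a * b) * (2 * (n + 2 + 1) * a ^ (2 * (n + 1)) * (a * b)) := by gcongr
          _ = _ := by ring
      have t3 : ‖c ^ 2 * (2 * ((n + 2 : ℝ) - Complex.I))
        * (2 * ((n + 1 : ℝ) - Complex.I) * twist n c * σ * σ + twist (n + 1) c * (b ^ 2 : ℝ))‖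
          ≤ (4 * (n + 3) * (n + 3) + 2 * (n + 3)) * ((a ^ 2) ^ (n + 2) * b ^ 2) := by
        have t4 : ‖2 * ((n + 1 : ℝ) - Complex.I) * twist n c * σ * σ
            + twist (n + 1) c * (b ^ 2 : ℝ)‖
            ≤ 2 * (n + 1 + 1) * a ^ (2 * n) * (a * b) * (a * b) + a ^ (2 * (n + 1)) * b ^ 2 := by
          refine (norm_add_le _ _).trans ?_
          simp only [norm_mul, norm_twist, Complex.norm_ofNat, Complex.norm_real,
            Real.norm_eq_abs]
          rw [abs_of_nonneg (by positivity : 0 ≤ b ^ 2)]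
          gcongr
        rw [norm_mul, norm_mul, norm_mul, norm_pow, Complex.norm_ofNat]
        calc a ^ 2 * (2 * ‖((n + 2 : ℝ) : ℂ) - Complex.I‖) * _
            ≤ a ^ 2 * (2 * (n + 2 + 1)) * (2 * (n + 1 + 1) * a ^ (2 * n) * (a * b) * (a * b)
                + a ^ (2 * (n + 1)) * b ^ 2) := by gcongr
          _ = (4 * (n + 3) * (n + 2) + 2 * (n + 3)) * ((a ^ 2) ^ (n + 2) * b ^ 2) := by ring
          _ ≤ _ := by gcongr; norm_num
      rw [hz]
      refine (norm_add₃_le).trans ?_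
      linarith
    have h1 : -‖z‖ ≤ z.re := (abs_le.1 (Complex.abs_re_le_norm z)).1
    have h2 : 0 ≤ 4 * (n + 3) * (n + 2) * (‖c‖ ^ 2) ^ (n + 1) * σ ^ 2 := by positivity
    have h3 : 0 ≤ (‖c‖ ^ 2) ^ (n + 2) * ‖q‖ ^ 2 := by positivity
    have h4 := mul_le_mul_of_nonneg_left h1 hε
    have h5 := mul_le_mul_of_nonneg_left hB hε
    have h6 := mul_le_mul_of_nonneg_right hε' h3
    linarith
  refine hexp.trans_eq ?_
  simp only [Pi.pow_apply, Pi.mul_apply]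
  have e : ∀ a b a' b' : ℝ, a = a' → b = b' → a + b = a' + b' := by
    rintro a b _ _ rfl rfl; rfl
  refine e _ _ _ _ ?_ ?_
  · change _ = _ * (2 * σ) + _ * (2 * ‖q‖ ^ 2)
    push_cast
    ring
  · congr 2
    rw [hz]
    push_cast
    ring


/-! ### Polar form of the potential and of its gradient -/

lemma norm_exp_sq (c : ℂ) : ‖Complex.exp c‖ ^ 2 = Real.exp (2 * c.re) := by
  rw [Complex.norm_exp, ← Real.exp_nat_mul]; norm_num

lemma exp_sq_mul_twist (j : ℕ) (c : ℂ) :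
    Complex.exp c ^ 2 * twist j (Complex.exp c) =
      ((Real.exp (2 * c.re) ^ (j + 1) : ℝ) : ℂ) *
        ((Real.cos (2 * c.im - 2 * c.re) : ℝ) + (Real.sin (2 * c.im - 2 * c.re) : ℝ) * Complex.I) := by
  rw [twist, norm_exp_sq, Real.log_exp, Complex.ofReal_cos, Complex.ofReal_sin,
    ← Complex.exp_mul_I]
  push_cast
  have e2 : Complex.exp c ^ 2 = Complex.exp (2 * (c.re : ℂ) + 2 * (c.im : ℂ) * Complex.I) := by
    rw [← Complex.exp_nat_mul]
    congr 1
    conv_lhs => rw [← Complex.re_add_im c]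
    push_cast
    ring
  rw [e2]
  simp only [← Complex.exp_nat_mul, ← Complex.exp_add]
  congr 1
  push_cast
  ring

lemma potential_exp (n : ℕ) (ε : ℝ) (c : ℂ) : potential n ε (Complex.exp c) =
    Real.exp (2 * c.re) ^ (n + 3) * (1 + ε * Real.cos (2 * c.im - 2 * c.re)) := by
  rw [potential, exp_sq_mul_twist, norm_exp_sq, Complex.re_ofReal_mul]
  simp only [Complex.add_re, Complex.ofReal_re, Complex.re_ofReal_mul, Complex.I_re]
  ring

/-- The gradient at `w = e^c` is `w` times a complex number whose real and imaginary parts are the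
velocities of `log r` and of `θ` along the gradient flow. -/
lemma hasGradientAt_potential (n : ℕ) (ε : ℝ) (c : ℂ) :
    HasGradientAt (potential n ε)
      (Complex.exp c * ((Real.exp (2 * c.re) ^ (n + 2) : ℝ) *
        ⟨2 * (n + 3) * (1 + ε * Real.cos (2 * c.im - 2 * c.re))
            + 2 * ε * Real.sin (2 * c.im - 2 * c.re),
          -(2 * ε * Real.sin (2 * c.im - 2 * c.re))⟩)) (Complex.exp c) := by
  obtain ⟨φ, hφ, hq⟩ := hasFDerivAt_potential n ε (Complex.exp c)
  rw [hasGradientAt_iff_hasFDerivAt]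
  refine hφ.congr_fderiv (ContinuousLinearMap.ext fun q => ?_)
  rw [hq, InnerProductSpace.toDual_apply_apply]
  -- Radial and angular components of `q` are the parts of `κ = q / e^c`.
  obtain ⟨κ, rfl⟩ : ∃ κ, q = Complex.exp c * κ :=
    ⟨q / Complex.exp c, by field_simp [Complex.exp_ne_zero]⟩
  have hin : ∀ a b : ℂ, inner ℝ (Complex.exp c * a) (Complex.exp c * b)
      = Real.exp (2 * c.re) * (a.re * b.re + a.im * b.im) := by
    intro a b
    rw [← norm_exp_sq, Complex.inner, map_mul, ← Complex.normSq_eq_norm_sq, Complex.normSq_apply]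
    simp only [Complex.mul_re, Complex.mul_im, Complex.conj_re, Complex.conj_im]
    ring
  have h1 := hin 1 κ
  rw [mul_one] at h1
  have hS := exp_sq_mul_twist (n + 2) c
  have hS' := exp_sq_mul_twist (n + 1) c
  set e := Complex.exp c
  set v := 2 * c.im - 2 * c.re
  rw [h1, hin, norm_exp_sq]
  set ρ := Real.exp (2 * c.re)
  have h2 : 2 * e * (e * κ) * twist (n + 2) e + e ^ 2 * (2 * ((n : ℂ) + 2 - Complex.I) *
      twist (n + 1) e * ((ρ * ((1 : ℂ).re * κ.re + (1 : ℂ).im * κ.im) : ℝ) : ℂ))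
      = ((ρ ^ (n + 3) : ℝ) : ℂ) * ((2 * κ + 2 * ((n : ℂ) + 2 - Complex.I) * (κ.re : ℝ)) *
        ((Real.cos v : ℝ) + (Real.sin v : ℝ) * Complex.I)) := by
    have e1 : 2 * e * (e * κ) * twist (n + 2) e = 2 * κ * (e ^ 2 * twist (n + 2) e) := by ring
    have e2 : ∀ x : ℂ, e ^ 2 * (2 * ((n : ℂ) + 2 - Complex.I) * twist (n + 1) e * x)
      = (2 * ((n : ℂ) + 2 - Complex.I) * x) * (e ^ 2 * twist (n + 1) e) := fun x => by ring
    rw [e1, e2, hS, hS']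
    simp only [Complex.one_re, Complex.one_im, zero_mul, add_zero, one_mul]
    push_cast
    ring
  rw [h2, Complex.re_ofReal_mul, Complex.re_ofReal_mul, Complex.im_ofReal_mul]
  generalize Real.cos v = C
  generalize Real.sin v = S
  simp
  ring

/-! ### Construction of the orbits -/

/-- The primitive `S` of `h` vanishing at `w₀` maps the line increasingly onto a half-line `(-∞, T)`;
`W` is its inverse there. -/
lemma exists_reparametrization (h : ℝ → ℝ) (hc : Continuous h) (hpos : ∀ x, 0 < h x)
    (w₀ : ℝ) (hint : MeasureTheory.IntegrableOn h (Ioi w₀))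
    {δ w₁ : ℝ} (hδ : 0 < δ) (hlow : ∀ x ≤ w₁, δ ≤ h x) :
    ∃ T : ℝ, 0 < T ∧ ∃ W : ℝ → ℝ, W 0 = w₀ ∧
      (∀ s < T, HasDerivAt W (h (W s))⁻¹ s) ∧
      Tendsto W atBot atBot ∧ Tendsto W (nhdsWithin T (Iio T)) atTop := by
  set S : ℝ → ℝ := fun w => ∫ x in w₀..w, h x with hS
  set T : ℝ := ∫ x in Ioi w₀, h x with hT
  have hd : ∀ w, HasDerivAt S (h w) w := fun w => hc.integral_hasStrictDerivAt w₀ w |>.hasDerivAt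
  have hmono : StrictMono S := strictMono_of_hasDerivAt_pos hd hpos
  have hlim : Tendsto S atTop (nhds T) :=
    MeasureTheory.intervalIntegral_tendsto_integral_Ioi w₀ hint tendsto_id
  have hlt : ∀ w, S w < T := fun w =>
    (hmono (lt_add_one w)).trans_le (hmono.monotone.ge_of_tendsto hlim _)
  have hS0 : S w₀ = 0 := by simp [hS]
  have hbot : Tendsto S atBot atBot := by
    have hd' : ∀ w, HasDerivAt (fun w => S w - δ * w) (h w - δ) w := fun w => by
      have := (hd w).sub ((hasDerivAt_id w).const_mul δ)
      rwa [mul_one] at this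
    have hm : MonotoneOn (fun w => S w - δ * w) (Iic w₁) := by
      refine monotoneOn_of_deriv_nonneg (convex_Iic w₁)
        (fun w _ => (hd' w).continuousAt.continuousWithinAt)
        (fun w _ => (hd' w).differentiableAt.differentiableWithinAt) fun w hw => ?_
      rw [(hd' w).deriv]
      exact sub_nonneg.2 (hlow w (mem_Iic.1 (interior_subset hw)))
    have hlin : Tendsto (fun w => (S w₁ - δ * w₁) + δ * w) atBot atBot :=
      tendsto_atBot_add_const_left _ _ (tendsto_id.const_mul_atBot hδ)
    refine tendsto_atBot_mono' _ ?_ hlin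
    filter_upwards [Iic_mem_atBot w₁] with w hw
    have := hm hw self_mem_Iic hw
    simp only at this
    linarith
  -- `-log (T - S)` is an increasing bijection of the line, so its inverse is a globally defined
  -- order isomorphism, from which continuity and limits of `W` are read off.
  set G : ℝ → ℝ := fun w => -Real.log (T - S w) with hG
  have hGd : ∀ w, HasDerivAt G (h w / (T - S w)) w := fun w => by
    have := (((hd w).const_sub T).log (sub_pos.2 (hlt w)).ne').neg
    convert! this using 1
    ring
  have hGmono : StrictMono G :=
    strictMono_of_hasDerivAt_pos hGd fun w => div_pos (hpos w) (sub_pos.2 (hlt w))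
  have hGtop : Tendsto G atTop atTop := by
    have h1 : Tendsto (fun w => T - S w) atTop (nhdsWithin 0 (Ioi 0)) := by
      refine tendsto_nhdsWithin_iff.2 ⟨by simpa using hlim.const_sub T, ?_⟩
      exact Eventually.of_forall fun w => sub_pos.2 (hlt w)
    exact tendsto_neg_atBot_atTop.comp (Real.tendsto_log_nhdsGT_zero.comp h1)
  have hGbot : Tendsto G atBot atBot := by
    have h1 : Tendsto (fun w => T - S w) atBot atTop :=
      tendsto_atTop_add_const_left _ T (tendsto_neg_atBot_atTop.comp hbot)
    exact tendsto_neg_atTop_atBot.comp (Real.tendsto_log_atTop.comp h1)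
  have hGcont : Continuous G := continuous_iff_continuousAt.2 fun w => (hGd w).continuousAt
  set iso := hGmono.orderIsoOfSurjective G (hGcont.surjective hGtop hGbot)
  have hiso : ∀ w, iso w = G w := fun w => rfl
  set W : ℝ → ℝ := fun s => iso.symm (-Real.log (T - s)) with hW
  have hSW : ∀ s < T, S (W s) = s := fun s hs => by
    have h1 : G (W s) = -Real.log (T - s) := iso.apply_symm_apply _
    have h2 := Real.log_injOn_pos (sub_pos.2 (hlt (W s))) (sub_pos.2 hs) (neg_injective h1)
    linarith
  have hT0 : 0 < T := hS0 ▸ hlt w₀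
  refine ⟨T, hT0, W, hmono.injective ((hSW 0 hT0).trans hS0.symm), fun s hs => ?_, ?_, ?_⟩
  · refine HasDerivAt.of_local_left_inverse ?_ (hd (W s)) (hpos _).ne'
      ((gt_mem_nhds hs).mono hSW)
    refine iso.symm.continuous.continuousAt.comp ?_
    exact ((continuousAt_const.sub continuousAt_id).log (sub_pos.2 hs).ne').neg
  · refine iso.symm.tendsto_atBot.comp (tendsto_neg_atTop_atBot.comp
      (Real.tendsto_log_atTop.comp ?_))
    exact tendsto_atTop_add_const_left _ T tendsto_neg_atBot_atTop
  · refine iso.symm.tendsto_atTop.comp (tendsto_neg_atBot_atTop.comp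
      (Real.tendsto_log_nhdsGT_zero.comp ?_))
    refine tendsto_nhdsWithin_iff.2 ⟨?_, ?_⟩
    · have : Tendsto (fun s : ℝ => T - s) (nhds T) (nhds (T - T)) :=
        tendsto_id.const_sub T
      rw [sub_self] at this
      exact this.mono_left nhdsWithin_le_nhds
    · filter_upwards [self_mem_nhdsWithin] with s hs using sub_pos.2 (mem_Iio.1 hs)

/-- The angle along an orbit, as a function of minus the phase. The integrand changes sign, but it is
the derivative of a bounded function plus a term bounded below by a multiple of `sin²`. -/
lemma exists_angle (M ε : ℝ) (hM : 3 ≤ M) (hε : 0 < ε) (hε' : ε ≤ 1 / 4) (w₀ θ₀ : ℝ) :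
    ∃ Θ : ℝ → ℝ, Θ w₀ = θ₀ ∧
      (∀ w, HasDerivAt Θ (2 * ε * Real.sin w /
        (4 * M * (1 + ε * Real.cos w) - 8 * ε * Real.sin w)) w) ∧
      Tendsto Θ atTop atTop ∧ Tendsto Θ atBot atBot := by
  have hφ : ∀ w, 3 / 4 ≤ 1 + ε * Real.cos w ∧ 1 + ε * Real.cos w ≤ 2 := fun w => by
    constructor <;> nlinarith [Real.neg_one_le_cos w, Real.cos_le_one w]
  have hy : ∀ w, |ε * Real.sin w| ≤ 1 / 4 := fun w => by
    rw [abs_mul, abs_of_pos hε]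
    nlinarith [Real.abs_sin_le_one w, abs_nonneg (Real.sin w)]
  have hD : ∀ w, 0 < 4 * M * (1 + ε * Real.cos w) - 8 * ε * Real.sin w := fun w => by
    nlinarith [(hφ w).1, (abs_le.1 (hy w)).2]
  have hcont : Continuous fun w => 2 * ε * Real.sin w /
        (4 * M * (1 + ε * Real.cos w) - 8 * ε * Real.sin w) :=
    Continuous.div (by fun_prop) (by fun_prop) fun w => (hD w).ne'
  set Θ : ℝ → ℝ := fun w => θ₀ + ∫ x in w₀..w, 2 * ε * Real.sin x /
        (4 * M * (1 + ε * Real.cos x) - 8 * ε * Real.sin x) with hΘ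
  have hd : ∀ w, HasDerivAt Θ (2 * ε * Real.sin w /
        (4 * M * (1 + ε * Real.cos w) - 8 * ε * Real.sin w)) w := fun w =>
    (hcont.integral_hasStrictDerivAt w₀ w).hasDerivAt.const_add θ₀
  set κ : ℝ := ε ^ 2 / (4 * M * (M + 1)) with hκ
  have hκ0 : 0 < κ := by positivity
  -- `B w + κ / 2 * w` is a primitive of `ε sin w / (2 M φ) + κ sin² w` with `φ = 1 + ε cos w`.
  set B : ℝ → ℝ := fun w => -(Real.log (1 + ε * Real.cos w) / (2 * M))
    - κ * (Real.sin w * Real.cos w) / 2 with hB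
  have hBd : ∀ w, HasDerivAt (fun w => B w + κ / 2 * w)
      (ε * Real.sin w / (2 * M * (1 + ε * Real.cos w)) + κ * Real.sin w ^ 2) w := fun w => by
    have hne : 1 + ε * Real.cos w ≠ 0 := by linarith [(hφ w).1]
    have h1 := ((((Real.hasDerivAt_cos w).const_mul ε).const_add 1).log hne).div_const (2 * M)
    have h2 := (((Real.hasDerivAt_sin w).mul (Real.hasDerivAt_cos w)).const_mul κ).div_const 2
    have h3 := (h1.neg.sub h2).add ((hasDerivAt_id w).const_mul (κ / 2))
    convert! h3 using 1
    have hM0 : M ≠ 0 := by linarith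
    have hc := Real.sin_sq_add_cos_sq w
    have : Real.cos w * Real.cos w = 1 - Real.sin w * Real.sin w := by linarith
    rw [this]
    field_simp
    ring
  have hsub : ∀ w, HasDerivAt (fun w => Θ w - (B w + κ / 2 * w)) _ w := fun w =>
    (hd w).sub (hBd w)
  have hmono : Monotone fun w => Θ w - (B w + κ / 2 * w) := by
    refine monotone_of_deriv_nonneg (fun w => (hsub w).differentiableAt) fun w => ?_
    rw [(hsub w).deriv]
    have hp := hD w
    obtain ⟨f1, f2⟩ := hφ w
    obtain ⟨y1, y2⟩ := abs_le.1 (hy w)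
    set φ := 1 + ε * Real.cos w
    set y := ε * Real.sin w with hyd
    have hM0 : 0 < M := by linarith
    have hf0 : 0 < φ := by linarith
    have hq : 0 < 2 * M * φ - 4 * y := by nlinarith
    have e1 : 2 * ε * Real.sin w / (4 * M * φ - 8 * ε * Real.sin w)
        = y / (2 * M * φ - 4 * y) := by
      rw [div_eq_div_iff hp.ne' hq.ne', hyd]; ring
    have e2 : κ * Real.sin w ^ 2 = y ^ 2 / (4 * M * (M + 1)) := by
      rw [hκ, hyd]; ring
    have e3 : y / (2 * M * φ - 4 * y) - y / (2 * M * φ)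
        = 4 * y ^ 2 / ((2 * M * φ) * (2 * M * φ - 4 * y)) := by
      rw [div_sub_div _ _ hq.ne' (by positivity), div_eq_div_iff (by positivity) (by positivity)]
      ring
    have e4 : y ^ 2 / (4 * M * (M + 1)) = 4 * y ^ 2 / ((4 * M) * (4 * M + 4)) := by
      field_simp
    have e5 : 4 * y ^ 2 / ((4 * M) * (4 * M + 4))
        ≤ 4 * y ^ 2 / ((2 * M * φ) * (2 * M * φ - 4 * y)) := by
      have : 2 * M * φ ≤ 4 * M := by nlinarith
      gcongr
      linarith
    rw [e1, e2]
    linarith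
  have hBb : ∀ w, |B w| ≤ 1 + κ := fun w => by
    have hl : |Real.log (1 + ε * Real.cos w) / (2 * M)| ≤ 1 := by
      obtain ⟨f1, f2⟩ := hφ w
      rw [abs_div, abs_of_pos (by linarith : 0 < 2 * M), div_le_one (by linarith), abs_le]
      have g1 := Real.log_le_sub_one_of_pos (by linarith : 0 < 1 + ε * Real.cos w)
      have g2 := Real.one_sub_inv_le_log_of_pos (by linarith : 0 < 1 + ε * Real.cos w)
      have g3 : (1 + ε * Real.cos w)⁻¹ ≤ 2 := by
        rw [inv_le_comm₀ (by linarith) (by norm_num)]; linarith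
      constructor <;> linarith
    have hs : |Real.sin w * Real.cos w| ≤ 1 := by
      rw [abs_mul]
      exact mul_le_one₀ (Real.abs_sin_le_one w) (abs_nonneg _) (Real.abs_cos_le_one w)
    rw [abs_le] at hl hs ⊢
    simp only [hB]
    constructor <;> nlinarith
  refine ⟨Θ, by simp [hΘ], hd, ?_, ?_⟩
  · have hlin : Tendsto (fun w => (Θ 0 - B 0 - (1 + κ)) + κ / 2 * w) atTop atTop :=
      tendsto_atTop_add_const_left _ _ (tendsto_id.const_mul_atTop (by positivity))
    refine tendsto_atTop_mono' _ ?_ hlin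
    filter_upwards [Ici_mem_atTop 0] with w hw
    have h1 := hmono (mem_Ici.1 hw)
    have h2 := (abs_le.1 (hBb w)).1
    simp only at h1
    linarith
  · have hlin : Tendsto (fun w => (Θ 0 - B 0 + (1 + κ)) + κ / 2 * w) atBot atBot :=
      tendsto_atBot_add_const_left _ _ (tendsto_id.const_mul_atBot (by positivity))
    refine tendsto_atBot_mono' _ ?_ hlin
    filter_upwards [Iic_mem_atBot 0] with w hw
    have h1 := hmono (mem_Iic.1 hw)
    have h2 := (abs_le.1 (hBb w)).2
    simp only at h1
    linarith

/-- The orbit through `exp c₀`, in the form `exp (ℓ + i α)` with `ℓ = log r` and `α` the angle. -/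
lemma exists_spiral_orbit (n : ℕ) (ε : ℝ) (hε : 0 < ε) (hε' : ε ≤ 1 / 4) (c₀ : ℂ) :
    ∃ T : ℝ, 0 < T ∧ ∃ ℓ α : ℝ → ℝ,
      (ℓ 0 : ℂ) + α 0 * Complex.I = c₀ ∧
      (∀ s < T, HasDerivAt (fun s => Complex.exp (ℓ s + α s * Complex.I))
        (gradient (potential n ε) (Complex.exp (ℓ s + α s * Complex.I))) s) ∧
      ContinuousOn α (Iio T) ∧
      Tendsto ℓ atBot atBot ∧ Tendsto ℓ (nhdsWithin T (Iio T)) atTop ∧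
      Tendsto α atBot atBot ∧ Tendsto α (nhdsWithin T (Iio T)) atTop := by
  set M : ℝ := n + 3 with hM
  have hM3 : 3 ≤ M := by rw [hM]; linarith [n.cast_nonneg (α := ℝ)]
  set w₀ : ℝ := 2 * c₀.re - 2 * c₀.im with hw₀
  obtain ⟨Θ, hΘ0, hΘd, hΘtop, hΘbot⟩ := exists_angle M ε hM3 hε hε' w₀ c₀.im
  set D : ℝ → ℝ := fun w => 4 * M * (1 + ε * Real.cos w) - 8 * ε * Real.sin w with hD
  have hDcont : Continuous D := by fun_prop
  have hcos : ∀ w, |ε * Real.cos w| ≤ 1 / 4 := fun w => by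
    rw [abs_mul, abs_of_pos hε]
    nlinarith [Real.abs_cos_le_one w, abs_nonneg (Real.cos w)]
  have hsin : ∀ w, |ε * Real.sin w| ≤ 1 / 4 := fun w => by
    rw [abs_mul, abs_of_pos hε]
    nlinarith [Real.abs_sin_le_one w, abs_nonneg (Real.sin w)]
  have hD1 : ∀ w, 1 ≤ D w := fun w => by
    simp only [hD]
    nlinarith [(abs_le.1 (hcos w)).1, (abs_le.1 (hsin w)).2]
  have hD2 : ∀ w, D w ≤ 8 * M + 2 := fun w => by
    simp only [hD]
    nlinarith [(abs_le.1 (hcos w)).2, (abs_le.1 (hsin w)).1]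
  -- `Λ` is the logarithm of the modulus, chosen so that the phase `2 * Θ - 2 * Λ` is `-w`.
  set Λ : ℝ → ℝ := fun w => Θ w + w / 2 with hΛ
  have hΛd : ∀ w, HasDerivAt Λ (2 * ε * Real.sin w / D w + 1 / 2) w := fun w =>
    (hΘd w).add ((hasDerivAt_id w).div_const 2)
  have hΛcont : Continuous Λ := continuous_iff_continuousAt.2 fun w => (hΛd w).continuousAt
  have hΛtop : Tendsto Λ atTop atTop :=
    hΘtop.atTop_add_atTop (tendsto_id.atTop_div_const (by norm_num))
  have hΛbot : Tendsto Λ atBot atBot :=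
    hΘbot.atBot_add_atBot (tendsto_id.atBot_div_const (by norm_num))
  -- `h` is the derivative of the original time with respect to the parameter `w`.
  set h : ℝ → ℝ := fun w => (Real.exp (2 * Λ w) ^ (n + 2) * D w)⁻¹ with hh
  have hpos' : ∀ w, 0 < Real.exp (2 * Λ w) ^ (n + 2) * D w := fun w =>
    mul_pos (by positivity) (by linarith [hD1 w])
  have hpos : ∀ w, 0 < h w := fun w => inv_pos.2 (hpos' w)
  have hcont : Continuous h :=
    Continuous.inv₀ (by fun_prop) fun w => (hpos' w).ne'
  have hint : MeasureTheory.IntegrableOn h (Ioi w₀) := by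
    refine integrable_of_isBigO_exp_neg one_pos hcont.continuousOn ?_
    refine Asymptotics.IsBigO.of_bound 1 ?_
    filter_upwards [hΘtop.eventually_ge_atTop 0, eventually_ge_atTop 0] with w h1 h2
    have h3 : Real.exp w ≤ Real.exp (2 * Λ w) ^ (n + 2) := by
      calc Real.exp w ≤ Real.exp (2 * Λ w) := Real.exp_le_exp.2 (by simp only [hΛ]; linarith)
        _ ≤ _ := le_self_pow₀ (Real.one_le_exp (by simp only [hΛ]; linarith)) (by omega)
    rw [Real.norm_of_nonneg (hpos w).le, Real.norm_of_nonneg (Real.exp_pos _).le, one_mul,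
      neg_one_mul, Real.exp_neg]
    refine inv_anti₀ (Real.exp_pos w) (h3.trans (le_mul_of_one_le_right (by positivity) (hD1 w)))
  obtain ⟨w₁, hw₁⟩ := eventually_atBot.1 (hΛbot.eventually_le_atBot 0)
  have hlow : ∀ x ≤ w₁, (8 * M + 2)⁻¹ ≤ h x := fun x hx => by
    refine inv_anti₀ (hpos' x) ?_
    have h1 : Real.exp (2 * Λ x) ^ (n + 2) ≤ 1 :=
      pow_le_one₀ (Real.exp_pos _).le (Real.exp_le_one_iff.2 (by linarith [hw₁ x hx]))
    exact (mul_le_of_le_one_left (by linarith [hD1 x]) h1).trans (hD2 x)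
  obtain ⟨T, hT, W, hW0, hWd, hWbot, hWtop⟩ := exists_reparametrization h hcont hpos w₀ hint
    (inv_pos.2 (by linarith : 0 < 8 * M + 2)) hlow
  refine ⟨T, hT, Λ ∘ W, Θ ∘ W, ?_, fun s hs => ?_, fun s hs => ?_, hΛbot.comp hWbot,
    hΛtop.comp hWtop, hΘbot.comp hWbot, hΘtop.comp hWtop⟩
  · have : Λ w₀ = c₀.re := by
      have e : Λ w₀ = Θ w₀ + w₀ / 2 := rfl
      rw [e, hΘ0, hw₀]
      ring
    simp only [Function.comp, hW0, hΘ0, this, Complex.re_add_im]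
  · have hZ : HasDerivAt (fun w => Complex.exp ((Λ w : ℂ) + Θ w * Complex.I)) _ (W s) :=
      ((hΛd (W s)).ofReal_comp.add ((hΘd (W s)).ofReal_comp.mul_const Complex.I)).cexp
    have hZW := hZ.scomp s (hWd s hs)
    refine hZW.congr_deriv ?_
    rw [(hasGradientAt_potential n ε _).gradient]
    have hre : ((Λ (W s) : ℂ) + Θ (W s) * Complex.I).re = Λ (W s) := by simp
    have him : ((Λ (W s) : ℂ) + Θ (W s) * Complex.I).im = Θ (W s) := by simp
    have hph : 2 * Θ (W s) - 2 * Λ (W s) = -W s := by simp only [hΛ]; ring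
    simp only [Function.comp, hre, him, hph, Real.cos_neg, Real.sin_neg]
    have hDne : D (W s) ≠ 0 := by linarith [hD1 (W s)]
    change (h (W s))⁻¹ • (_ * (_ + ((2 * ε * Real.sin (W s) / D (W s) : ℝ) : ℂ) * _)) = _
    rw [Complex.real_smul, mul_left_comm]
    congr 1
    simp only [hh, inv_inv]
    rw [Complex.ofReal_mul, mul_assoc]
    congr 1
    apply Complex.ext
    · rw [Complex.re_ofReal_mul]
      simp only [Complex.add_re, Complex.ofReal_re, Complex.re_ofReal_mul, Complex.I_re]
      field_simp
      simp only [hD]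
      ring
    · rw [Complex.im_ofReal_mul]
      simp only [Complex.add_im, Complex.ofReal_im, Complex.im_ofReal_mul, Complex.I_im]
      field_simp
      ring
  · exact ((hΘd (W s)).continuousAt.comp (hWd s hs).continuousAt).continuousWithinAt

/-! ### Global properties of the potential -/

lemma potential_pos (n : ℕ) {ε : ℝ} (hε : 0 < ε) (hε' : ε ≤ 1 / 4) {w : ℂ} (hw : w ≠ 0) :
    0 < potential n ε w := by
  rw [← Complex.exp_log hw, potential_exp]
  refine mul_pos (by positivity) ?_
  nlinarith [Real.neg_one_le_cos (2 * (Complex.log w).im - 2 * (Complex.log w).re)]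

lemma potential_zero (n : ℕ) (ε : ℝ) : potential n ε 0 = 0 := by
  simp [potential]

/-- The radial component alone already bounds the gradient from below by `‖w‖ ^ (2 * n + 5)`. -/
lemma lojasiewicz_potential (n : ℕ) {ε : ℝ} (hε : 0 < ε) (hε' : ε ≤ 1 / 4) (w : ℂ) :
    1 / 2 * potential n ε w ^ ((2 * n + 5 : ℝ) / (2 * n + 6)) ≤ ‖gradient (potential n ε) w‖ := by
  have hϑ : (0 : ℝ) < (2 * n + 5 : ℝ) / (2 * n + 6) := by positivity
  by_cases hw : w = 0
  · rw [hw, potential_zero, Real.zero_rpow hϑ.ne', mul_zero]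
    exact norm_nonneg _
  have hle := (potential_pos n hε hε' hw).le
  obtain ⟨c, rfl⟩ : ∃ c, w = Complex.exp c := ⟨_, (Complex.exp_log hw).symm⟩
  rw [(hasGradientAt_potential n ε c).gradient]
  rw [potential_exp] at hle ⊢
  set v := 2 * c.im - 2 * c.re
  have hn : (0 : ℝ) ≤ n := n.cast_nonneg
  have hr : Real.exp (2 * c.re) ^ (n + 3) * (1 + ε * Real.cos v)
      ≤ Real.exp (2 * c.re) ^ (n + 3) * 2 := by
    gcongr
    nlinarith [Real.cos_le_one v]
  have h1 : (Real.exp (2 * c.re) ^ (n + 3) * (1 + ε * Real.cos v)) ^ ((2 * n + 5 : ℝ) / (2 * n + 6))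
      ≤ Real.exp ((2 * n + 5) * c.re) * 2 := by
    refine (Real.rpow_le_rpow hle hr hϑ.le).trans ?_
    rw [Real.mul_rpow (by positivity) (by norm_num), ← Real.exp_nat_mul, ← Real.exp_mul]
    refine mul_le_mul (le_of_eq ?_) ?_ (by positivity) (by positivity)
    · congr 1
      push_cast
      field_simp
      ring
    · refine (Real.rpow_le_rpow_of_exponent_le one_le_two ?_).trans_eq (Real.rpow_one 2)
      rw [div_le_one (by positivity)]
      linarith
  have h2 : Real.exp ((2 * n + 5) * c.re) = Real.exp c.re * Real.exp (2 * c.re) ^ (n + 2) := by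
    rw [← Real.exp_nat_mul, ← Real.exp_add]
    congr 1
    push_cast
    ring
  rw [norm_mul, norm_mul, Complex.norm_exp, Complex.norm_real, Real.norm_of_nonneg (by positivity)]
  have h3 : 1 ≤ ‖(⟨2 * (n + 3) * (1 + ε * Real.cos v) + 2 * ε * Real.sin v,
          -(2 * ε * Real.sin v)⟩ : ℂ)‖ := by
    refine le_trans ?_ (Complex.re_le_norm _)
    change 1 ≤ 2 * (n + 3) * (1 + ε * Real.cos v) + 2 * ε * Real.sin v
    have k1 : -(1 / 4) ≤ ε * Real.cos v := by nlinarith [Real.neg_one_le_cos v]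
    have k2 : -(1 / 4) ≤ ε * Real.sin v := by nlinarith [Real.neg_one_le_sin v]
    nlinarith
  calc _ ≤ 1 / 2 * (Real.exp ((2 * n + 5) * c.re) * 2) := by gcongr
    _ = Real.exp c.re * Real.exp (2 * c.re) ^ (n + 2) := by rw [h2]; ring
    _ ≤ _ := by
      rw [← mul_assoc]
      exact le_mul_of_one_le_right (by positivity) h3

lemma convexOn_potential (n : ℕ) {ε : ℝ} (hε : 0 ≤ ε)
    (hε' : ε * (4 * (n + 3 : ℝ) ^ 2 + 10 * (n + 3) + 2) ≤ 2 * (n + 3)) :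
    ConvexOn ℝ univ (potential n ε) := by
  refine ⟨convex_univ, fun x _ y _ a b ha hb hab => ?_⟩
  have h := (potential_line_convex n hε hε' x (y - x)).2 (mem_univ 0) (mem_univ 1) ha hb hab
  have e1 : x + ((a • (0 : ℝ) + b • (1 : ℝ) : ℝ) : ℂ) * (y - x) = a • x + b • y := by
    have : (a : ℂ) = 1 - b := by
      rw [← Complex.ofReal_one, ← hab]; push_cast; ring
    simp only [Complex.real_smul, smul_eq_mul, this]
    push_cast
    ring
  simpa only [e1, Complex.ofReal_zero, zero_mul, add_zero, Complex.ofReal_one, one_mul,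
    add_sub_cancel] using h

lemma hasGradientAt_comp_isometry {E F : Type*} [NormedAddCommGroup E] [InnerProductSpace ℝ E]
    [CompleteSpace E] [NormedAddCommGroup F] [InnerProductSpace ℝ F] [CompleteSpace F]
    (e : E ≃ₗᵢ[ℝ] F) {f : E → ℝ} {g : E} {p : F} (h : HasGradientAt f g (e.symm p)) :
    HasGradientAt (f ∘ e.symm) (e g) p := by
  rw [hasGradientAt_iff_hasFDerivAt] at h ⊢
  have h2 : HasFDerivAt e.symm (e.symm.toContinuousLinearEquiv : F →L[ℝ] E) p :=
    e.symm.toContinuousLinearEquiv.hasFDerivAt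
  refine (h.comp p h2).congr_fderiv (ContinuousLinearMap.ext fun q => ?_)
  simp only [ContinuousLinearMap.comp_apply, InnerProductSpace.toDual_apply_apply]
  rw [← e.inner_map_map]
  congr 1
  exact e.apply_symm_apply q


/-! ### Transfer to the Euclidean plane -/

theorem gradient_conjecture_fails_convex_KL :
    ∀ k : ℕ, 1 ≤ k →
    ∃ f : EuclideanSpace ℝ (Fin 2) → ℝ,
      -- (a) convex
      ConvexOn ℝ Set.univ f ∧
      -- (b) C^k
      ContDiff ℝ k f ∧
      -- (c) real analytic away from the origin
      AnalyticOnNhd ℝ f {p | p ≠ 0} ∧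
      -- (d) unique minimum at the origin
      f 0 = 0 ∧ (∀ p, p ≠ 0 → 0 < f p) ∧
      -- (e) Łojasiewicz gradient inequality
      (∃ c : ℝ, 0 < c ∧ ∃ ϑ ∈ Set.Ioo (0:ℝ) 1,
        ∀ p, c * f p ^ ϑ ≤ ‖gradient f p‖) ∧
      -- (f) gradient orbits spiral at the origin and at infinity
      (∀ γ₀ : EuclideanSpace ℝ (Fin 2), γ₀ ≠ 0 →
        ∃ T : ℝ, 0 < T ∧
        ∃ γ : ℝ → EuclideanSpace ℝ (Fin 2),
          γ 0 = γ₀ ∧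
          (∀ s, s < T → HasDerivAt γ (gradient f (γ s)) s) ∧
          Tendsto (fun s => ‖γ s‖) (nhdsWithin T (Set.Iio T)) atTop ∧
          Tendsto γ atBot (nhds 0) ∧
          ∃ α : ℝ → ℝ,
            ContinuousOn α (Set.Iio T) ∧
            (∀ s, s < T → γ s = ‖γ s‖ • (WithLp.equiv 2 (Fin 2 → ℝ)).symm ![Real.cos (α s), Real.sin (α s)]) ∧
            Tendsto α atBot atBot ∧
            Tendsto α (nhdsWithin T (Set.Iio T)) atTop) := by
  intro k _
  set ε : ℝ := 1 / (4 * (k + 3 : ℝ) ^ 2 + 10 * (k + 3) + 2) with hεdef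
  have hk : (0 : ℝ) ≤ k := k.cast_nonneg
  have hε : 0 < ε := by positivity
  have hε4 : ε ≤ 1 / 4 := by
    rw [hεdef]
    exact one_div_le_one_div_of_le (by norm_num) (by nlinarith)
  have hεc : ε * (4 * (k + 3 : ℝ) ^ 2 + 10 * (k + 3) + 2) ≤ 2 * (k + 3) := by
    rw [hεdef, one_div_mul_cancel (by positivity)]
    linarith
  set e : ℂ ≃ₗᵢ[ℝ] EuclideanSpace ℝ (Fin 2) := Complex.orthonormalBasisOneI.repr with he
  have hgrad : ∀ p, p ≠ 0 → gradient (potential k ε ∘ e.symm) p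
      = e (gradient (potential k ε) (e.symm p)) := fun p hp => by
    have h0 : e.symm p ≠ 0 := by simpa using hp
    have hd := (analyticAt_potential k ε h0).differentiableAt.hasGradientAt
    exact (hasGradientAt_comp_isometry e hd).gradient
  refine ⟨potential k ε ∘ e.symm, ?_, ?_, fun p hp => ?_, ?_, fun p hp => ?_, ?_, ?_⟩
  · exact (convexOn_potential k hε.le hεc).comp_linearMap e.symm.toLinearEquiv.toLinearMap
  · exact (contDiff_potential k ε).comp e.symm.contDiff
  · have h0 : e.symm p ≠ 0 := by simpa using hp
    exact (analyticAt_potential k ε h0).comp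
      (e.symm.toContinuousLinearEquiv.toContinuousLinearMap.analyticAt p)
  · simp [potential_zero]
  · exact potential_pos k hε hε4 (by simpa using hp)
  · refine ⟨1 / 2, by norm_num, (2 * k + 5 : ℝ) / (2 * k + 6), ⟨by positivity, ?_⟩, fun p => ?_⟩
    · rw [div_lt_one (by positivity)]
      linarith
    · by_cases hp : p = 0
      · rw [hp, Function.comp_apply, map_zero, potential_zero,
          Real.zero_rpow (by positivity), mul_zero]
        exact norm_nonneg _
      · rw [hgrad p hp, LinearIsometryEquiv.norm_map]
        exact lojasiewicz_potential k hε hε4 _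
  · intro γ₀ hγ₀
    have h0 : e.symm γ₀ ≠ 0 := by simpa using hγ₀
    obtain ⟨T, hT, ℓ, α, h00, hd, hαc, hℓbot, hℓtop, hαbot, hαtop⟩ :=
      exists_spiral_orbit k ε hε hε4 (Complex.log (e.symm γ₀))
    have hnorm : ∀ s, ‖e (Complex.exp (ℓ s + α s * Complex.I))‖ = Real.exp (ℓ s) := fun s => by
      rw [LinearIsometryEquiv.norm_map, Complex.norm_exp]
      simp
    refine ⟨T, hT, fun s => e (Complex.exp (ℓ s + α s * Complex.I)), ?_, fun s hs => ?_, ?_, ?_,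
      α, hαc, fun s hs => ?_, hαbot, hαtop⟩
    · simp only [h00, Complex.exp_log h0, LinearIsometryEquiv.apply_symm_apply]
    · have hne : e (Complex.exp (ℓ s + α s * Complex.I)) ≠ 0 := by
        simp [Complex.exp_ne_zero]
      rw [hgrad _ hne, LinearIsometryEquiv.symm_apply_apply]
      exact e.toContinuousLinearEquiv.toContinuousLinearMap.hasFDerivAt.comp_hasDerivAt s (hd s hs)
    · simp only [hnorm]
      exact Real.tendsto_exp_atTop.comp hℓtop
    · refine tendsto_zero_iff_norm_tendsto_zero.2 ?_
      simp only [hnorm]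
      exact Real.tendsto_exp_atBot.comp hℓbot
    · rw [hnorm]
      ext i
      rw [he]
      fin_cases i <;> simp [Complex.exp_re, Complex.exp_im]
end

section
/- Under the standing hypotheses on a and b, the map M_{a,b} is a bijection onto ℝ² \ {(0,0)} up to the 2π-periodicity in θ: (i) for every p ∈ ℝ² with p ≠ (0,0) there exist t, θ ∈ ℝ with M_{a,b}(t,θ) = p; (ii) if M_{a,b}(t,θ) = M_{a,b}(t',θ') for t, t', θ, θ' ∈ ℝ, then t = t' and θ − θ' is an integer multiple of 2π. -/
/-!
Fix `p = (x, y) ≠ 0`. In the frame rotated by `t`, the equation `M t θ = p` says exactly that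
`cos θ = u` and `sin θ = v`, where `u = (x cos t + y sin t) / a t` and
`v = (y cos t - x sin t) / b t`. It is therefore solvable in `θ`, uniquely modulo `2π`, if and only
if `F t := u² + v²` equals `1`, i.e. `p` lies on the ellipse with parameter `t`.

Differentiating gives `F' = -2 (u² a'/a + u v (a² - b²)/(a b) + v² b'/b)`. The hypothesis
`(a² - b²)² < 4 a b a' b'` is the negativity of the discriminant of this quadratic form, so `F' < 0`
and `F` is strictly decreasing (`ellipseGauge_strictAnti`). Since
`|p|² / a² ≤ F ≤ |p|² / b²`, `F` exceeds `1` near `-∞` and drops below `1` near `+∞`; hence it takes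
the value `1` exactly once.
-/

open Filter Real

/-- The quadratic gauge, evaluated at `(x, y)`, of the ellipse with semi-axes `a t`, `b t` rotated by
the angle `t`; the ellipse is the level set where it equals `1`. -/
noncomputable def ellipseGauge (a b : ℝ → ℝ) (x y t : ℝ) : ℝ :=
  ((x * cos t + y * sin t) / a t) ^ 2 + ((y * cos t - x * sin t) / b t) ^ 2

lemma rotated_normSq (x y t : ℝ) :
    (x * cos t + y * sin t) ^ 2 + (y * cos t - x * sin t) ^ 2 = x ^ 2 + y ^ 2 := by
  linear_combination (x ^ 2 + y ^ 2) * sin_sq_add_cos_sq t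

lemma normSq_pos_of_ne {x y : ℝ} (h : (x, y) ≠ ((0, 0) : ℝ × ℝ)) : 0 < x ^ 2 + y ^ 2 := by
  by_contra hn
  have hx : x = 0 := by nlinarith [sq_nonneg x, sq_nonneg y]
  have hy : y = 0 := by nlinarith [sq_nonneg x, sq_nonneg y]
  exact h (by rw [hx, hy])

/-- Here `P`, `Q` are the rotated coordinates of a point (so `P' = Q` and `Q' = -P`), and `A'`, `B'`
the derivatives of the semi-axes `A`, `B`. The left-hand side is the derivative of the gauge. -/
lemma gauge_deriv_neg {A B A' B' P Q : ℝ} (hA : 0 < A) (hB : 0 < B) (hA' : 0 < A')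
    (hdisc : (A ^ 2 - B ^ 2) ^ 2 < 4 * A * B * A' * B') (hPQ : 0 < P ^ 2 + Q ^ 2) :
    2 * (P / A) * ((Q * A - P * A') / A ^ 2) + 2 * (Q / B) * ((-P * B - Q * B') / B ^ 2) < 0 := by
  have hP : P = P / A * A := by field_simp
  have hQ : Q = Q / B * B := by field_simp
  set u := P / A
  set v := Q / B
  rw [hP, hQ] at hPQ ⊢
  have huv : u ≠ 0 ∨ v ≠ 0 := by
    by_contra! h
    rw [h.1, h.2] at hPQ
    norm_num at hPQ
  have hform : 0 < u ^ 2 * A' * B + u * v * (A ^ 2 - B ^ 2) + v ^ 2 * B' * A := by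
    -- Completing the square: `4 A' B` times the form is a square plus `v²` times minus the
    -- discriminant.
    have key : 0 < 4 * (A' * B) * (u ^ 2 * A' * B + u * v * (A ^ 2 - B ^ 2) + v ^ 2 * B' * A) := by
      have e : 4 * (A' * B) * (u ^ 2 * A' * B + u * v * (A ^ 2 - B ^ 2) + v ^ 2 * B' * A)
          = (2 * (A' * B) * u + v * (A ^ 2 - B ^ 2)) ^ 2
            + v ^ 2 * (4 * A * B * A' * B' - (A ^ 2 - B ^ 2) ^ 2) := by ring
      rw [e]
      rcases eq_or_ne v 0 with hv | hv
      · have hu : u ≠ 0 := huv.resolve_right (by simpa using hv)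
        rw [hv]
        simp only [zero_mul, add_zero, ne_eq, OfNat.ofNat_ne_zero, not_false_eq_true, zero_pow]
        positivity
      · have := sub_pos.2 hdisc
        positivity
    exact (pos_iff_pos_of_mul_pos key).1 (by positivity)
  have e : 2 * u * ((v * B * A - u * A * A') / A ^ 2)
        + 2 * v * ((-(u * A) * B - v * B * B') / B ^ 2)
      = -(2 * (u ^ 2 * A' * B + u * v * (A ^ 2 - B ^ 2) + v ^ 2 * B' * A) / (A * B)) := by
    field_simp
    ring
  rw [e]
  have : 0 < 2 * (u ^ 2 * A' * B + u * v * (A ^ 2 - B ^ 2) + v ^ 2 * B' * A) / (A * B) := by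
    positivity
  linarith

section Gauge

variable {a b : ℝ → ℝ} {x y : ℝ}

lemma ellipseGauge_hasDerivAt (ha : ContDiff ℝ 1 a) (hb : ContDiff ℝ 1 b)
    (hapos : ∀ t, 0 < a t) (hbpos : ∀ t, 0 < b t) (t : ℝ) :
    HasDerivAt (ellipseGauge a b x y)
      (2 * ((x * cos t + y * sin t) / a t)
          * (((y * cos t - x * sin t) * a t - (x * cos t + y * sin t) * deriv a t) / a t ^ 2)
        + 2 * ((y * cos t - x * sin t) / b t)
          * ((-(x * cos t + y * sin t) * b t - (y * cos t - x * sin t) * deriv b t) / b t ^ 2))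
      t := by
  have hda : HasDerivAt a (deriv a t) t := (ha.differentiable one_ne_zero t).hasDerivAt
  have hdb : HasDerivAt b (deriv b t) t := (hb.differentiable one_ne_zero t).hasDerivAt
  have hP : HasDerivAt (fun s => x * cos s + y * sin s) (y * cos t - x * sin t) t := by
    exact (((hasDerivAt_cos t).const_mul x).add ((hasDerivAt_sin t).const_mul y)).congr_deriv
      (by ring)
  have hQ : HasDerivAt (fun s => y * cos s - x * sin s) (-(x * cos t + y * sin t)) t := by
    exact (((hasDerivAt_cos t).const_mul y).sub ((hasDerivAt_sin t).const_mul x)).congr_deriv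
      (by ring)
  exact (((hP.div hda (hapos t).ne').pow 2).add ((hQ.div hdb (hbpos t).ne').pow 2)).congr_deriv
    (by simp)

lemma ellipseGauge_strictAnti (ha : ContDiff ℝ 1 a) (hb : ContDiff ℝ 1 b)
    (hapos : ∀ t, 0 < a t) (hbpos : ∀ t, 0 < b t) (ha' : ∀ t, 0 < deriv a t)
    (hfol : ∀ t, (a t ^ 2 - b t ^ 2) ^ 2 < 4 * a t * b t * deriv a t * deriv b t)
    (hxy : 0 < x ^ 2 + y ^ 2) : StrictAnti (ellipseGauge a b x y) := by
  apply strictAnti_of_deriv_neg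
  intro t
  rw [(ellipseGauge_hasDerivAt ha hb hapos hbpos t).deriv]
  exact gauge_deriv_neg (hapos t) (hbpos t) (ha' t) (hfol t) (by rwa [rotated_normSq])

lemma le_ellipseGauge {t : ℝ} (hbpos : 0 < b t) (hba : b t ≤ a t) :
    (x ^ 2 + y ^ 2) / a t ^ 2 ≤ ellipseGauge a b x y t := by
  rw [← rotated_normSq x y t, ellipseGauge, add_div, div_pow, div_pow]
  gcongr

lemma ellipseGauge_le {t : ℝ} (hbpos : 0 < b t) (hba : b t ≤ a t) :
    ellipseGauge a b x y t ≤ (x ^ 2 + y ^ 2) / b t ^ 2 := by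
  rw [← rotated_normSq x y t, ellipseGauge, div_pow, div_pow, add_div _ _ (b t ^ 2)]
  gcongr

lemma exists_ellipseGauge_eq_one (ha : ContDiff ℝ 1 a) (hb : ContDiff ℝ 1 b)
    (hbpos : ∀ t, 0 < b t) (hba : ∀ t, b t ≤ a t)
    (haBot : Tendsto a atBot (nhds 0)) (hbTop : Tendsto b atTop atTop)
    (hxy : 0 < x ^ 2 + y ^ 2) : ∃ t, ellipseGauge a b x y t = 1 := by
  have hapos : ∀ t, 0 < a t := fun t => (hbpos t).trans_le (hba t)
  have hcont : Continuous (ellipseGauge a b x y) := continuous_iff_continuousAt.2 fun t =>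
    (ellipseGauge_hasDerivAt ha hb hapos hbpos t).continuousAt
  have hr : 0 < √(x ^ 2 + y ^ 2) := sqrt_pos.2 hxy
  obtain ⟨t₁, h₁⟩ := (haBot.eventually_lt_const hr).exists
  obtain ⟨t₂, h₂⟩ := (hbTop.eventually_ge_atTop √(x ^ 2 + y ^ 2)).exists
  have hlow : 1 ≤ ellipseGauge a b x y t₁ := by
    refine le_trans ?_ (le_ellipseGauge (hbpos t₁) (hba t₁))
    have := hapos t₁
    rw [one_le_div (by positivity), ← sq_sqrt hxy.le]
    gcongr
  have hup : ellipseGauge a b x y t₂ ≤ 1 := by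
    refine (ellipseGauge_le (hbpos t₂) (hba t₂)).trans ?_
    have := hbpos t₂
    rw [div_le_one (by positivity), ← sq_sqrt hxy.le]
    gcongr
  exact intermediate_value_univ t₂ t₁ hcont ⟨hup, hlow⟩

end Gauge

lemma exists_cos_sin_eq {u v : ℝ} (h : u ^ 2 + v ^ 2 = 1) : ∃ θ, cos θ = u ∧ sin θ = v := by
  have hz : ‖(⟨u, v⟩ : ℂ)‖ = 1 := by
    rw [Complex.norm_eq_sqrt_sq_add_sq, h, sqrt_one]
  refine ⟨Complex.arg ⟨u, v⟩, ?_, ?_⟩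
  · simpa [hz] using Complex.norm_mul_cos_arg ⟨u, v⟩
  · simpa [hz] using Complex.norm_mul_sin_arg ⟨u, v⟩

/-- `(x, y)` is the image of `(t, θ)`, with `A = a t` and `B = b t`, exactly when
`(cos θ, sin θ)` are its rotated and rescaled coordinates. -/
lemma ellipse_eq_iff {A B x y t θ : ℝ} (hA : 0 < A) (hB : 0 < B) :
    ((A * cos t * cos θ - B * sin t * sin θ, A * sin t * cos θ + B * cos t * sin θ) = (x, y)) ↔
      cos θ = (x * cos t + y * sin t) / A ∧ sin θ = (y * cos t - x * sin t) / B := by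
  rw [eq_div_iff hA.ne', eq_div_iff hB.ne', Prod.mk.injEq]
  have hcs := sin_sq_add_cos_sq t
  constructor
  · rintro ⟨rfl, rfl⟩
    constructor
    · linear_combination -(A * cos θ) * hcs
    · linear_combination -(B * sin θ) * hcs
  · rintro ⟨h₁, h₂⟩
    constructor
    · linear_combination cos t * h₁ - sin t * h₂ + x * hcs
    · linear_combination sin t * h₁ + cos t * h₂ + y * hcs

theorem ellipse_map_bijection_mod_two_pi
    (a b : ℝ → ℝ)
    (ha : ContDiff ℝ 1 a) (hb : ContDiff ℝ 1 b)
    (hbpos : ∀ t, 0 < b t) (hba : ∀ t, b t ≤ a t)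
    (ha' : ∀ t, 0 < deriv a t) (hb' : ∀ t, 0 < deriv b t)
    (haBot : Tendsto a atBot (nhds 0)) (hbBot : Tendsto b atBot (nhds 0))
    (haTop : Tendsto a atTop atTop) (hbTop : Tendsto b atTop atTop)
    (hfol : ∀ t, (a t ^ 2 - b t ^ 2) ^ 2 < 4 * a t * b t * deriv a t * deriv b t)
    (M : ℝ → ℝ → ℝ × ℝ)
    (hM : ∀ t θ, M t θ =
      (a t * Real.cos t * Real.cos θ - b t * Real.sin t * Real.sin θ,
       a t * Real.sin t * Real.cos θ + b t * Real.cos t * Real.sin θ)) :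
    (∀ p : ℝ × ℝ, p ≠ (0, 0) → ∃ t θ : ℝ, M t θ = p) ∧
    (∀ t t' θ θ' : ℝ, M t θ = M t' θ' →
      t = t' ∧ ∃ n : ℤ, θ - θ' = n * (2 * Real.pi)) := by
  have hapos : ∀ t, 0 < a t := fun t => (hbpos t).trans_le (hba t)
  have hiff : ∀ t θ x y, M t θ = (x, y) ↔
      cos θ = (x * cos t + y * sin t) / a t ∧ sin θ = (y * cos t - x * sin t) / b t := by
    intro t θ x y
    rw [hM]
    exact ellipse_eq_iff (hapos t) (hbpos t)
  have hgauge : ∀ t θ x y, M t θ = (x, y) → ellipseGauge a b x y t = 1 := by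
    intro t θ x y h
    obtain ⟨hc, hs⟩ := (hiff t θ x y).1 h
    rw [ellipseGauge, ← hc, ← hs, cos_sq_add_sin_sq]
  constructor
  · rintro ⟨x, y⟩ hp
    obtain ⟨t, ht⟩ := exists_ellipseGauge_eq_one ha hb hbpos hba haBot hbTop (normSq_pos_of_ne hp)
    obtain ⟨θ, hθ⟩ := exists_cos_sin_eq ht
    exact ⟨t, θ, (hiff t θ x y).2 hθ⟩
  · intro t t' θ θ' h
    obtain ⟨x, y, hp'⟩ : ∃ x y, M t' θ' = (x, y) := ⟨_, _, rfl⟩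
    have hp : M t θ = (x, y) := h.trans hp'
    have hg := hgauge t θ x y hp
    -- The origin has gauge `0`, so it is not in the image.
    have hne : (x, y) ≠ ((0, 0) : ℝ × ℝ) := by
      intro h0
      obtain ⟨rfl, rfl⟩ := Prod.mk.inj h0
      simp [ellipseGauge] at hg
    have htt : t = t' :=
      (ellipseGauge_strictAnti ha hb hapos hbpos ha' hfol (normSq_pos_of_ne hne)).injective
        (hg.trans (hgauge t' θ' x y hp').symm)
    subst htt
    refine ⟨rfl, ?_⟩
    obtain ⟨hc, hs⟩ := (hiff t θ x y).1 hp
    obtain ⟨hc', hs'⟩ := (hiff t θ' x y).1 hp'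
    obtain ⟨n, hn⟩ := Real.Angle.angle_eq_iff_two_pi_dvd_sub.1
      (Real.Angle.cos_sin_inj (hc.trans hc'.symm) (hs.trans hs'.symm))
    exact ⟨n, by rw [hn]; ring⟩
end

section
/- Under the standing hypotheses on a and b, for every (t, θ) ∈ ℝ² the Jacobian determinant of the map M_{a,b} : ℝ² → ℝ² at (t, θ), i.e. (∂X/∂t)(∂Y/∂θ) − (∂Y/∂t)(∂X/∂θ) where M_{a,b} = (X, Y), equals a'(t) b(t) cos²θ + a(t) b'(t) sin²θ + (a(t)² − b(t)²) cos θ sin θ, and this quantity is strictly positive. -/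
/-!
Rotating by `-t` turns the `t`- and `θ`-derivatives of the map into
`(a' cos θ - b sin θ, a cos θ + b' sin θ)` and `(-a sin θ, b cos θ)`; a rotation preserves
determinants, which gives the formula. The result is a binary quadratic form in `(cos θ, sin θ)`
with coefficients `a' b > 0`, `a b'` and `a² - b²`. The last hypothesis on `a` and `b` says exactly that its
discriminant is negative, so it is positive definite (`quadForm_pos`).
-/

open Filter Real

theorem quadForm_pos {P Q R x y : ℝ} (hP : 0 < P) (hD : R ^ 2 < 4 * P * Q)
    (hxy : x ^ 2 + y ^ 2 = 1) : 0 < P * x ^ 2 + Q * y ^ 2 + R * x * y := by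
  rcases eq_or_ne y 0 with rfl | hy
  · have hx : x ^ 2 = 1 := by linarith
    simpa [hx] using hP
  · have hy2 : 0 < y ^ 2 := by positivity
    have hsq : 4 * P * (P * x ^ 2 + Q * y ^ 2 + R * x * y)
        = (2 * P * x + R * y) ^ 2 + (4 * P * Q - R ^ 2) * y ^ 2 := by ring
    have hpos : 0 < 4 * P * (P * x ^ 2 + Q * y ^ 2 + R * x * y) := by
      rw [hsq]
      have := mul_pos (sub_pos.mpr hD) hy2
      positivity
    exact pos_of_mul_pos_right hpos (by positivity)

theorem ellipse_map_jacobian_positive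
    (a b : ℝ → ℝ)
    (ha : ContDiff ℝ 1 a) (hb : ContDiff ℝ 1 b)
    (hbpos : ∀ t, 0 < b t) (hba : ∀ t, b t ≤ a t)
    (ha' : ∀ t, 0 < deriv a t) (hb' : ∀ t, 0 < deriv b t)
    (haBot : Tendsto a atBot (nhds 0)) (hbBot : Tendsto b atBot (nhds 0))
    (haTop : Tendsto a atTop atTop) (hbTop : Tendsto b atTop atTop)
    (hfol : ∀ t, (a t ^ 2 - b t ^ 2) ^ 2 < 4 * a t * b t * deriv a t * deriv b t)
    (X Y : ℝ → ℝ → ℝ)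
    (hX : ∀ t θ, X t θ = a t * Real.cos t * Real.cos θ - b t * Real.sin t * Real.sin θ)
    (hY : ∀ t θ, Y t θ = a t * Real.sin t * Real.cos θ + b t * Real.cos t * Real.sin θ) :
    ∀ t θ : ℝ,
      deriv (fun u => X u θ) t * deriv (fun v => Y t v) θ
          - deriv (fun u => Y u θ) t * deriv (fun v => X t v) θ
        = deriv a t * b t * Real.cos θ ^ 2 + a t * deriv b t * Real.sin θ ^ 2
            + (a t ^ 2 - b t ^ 2) * Real.cos θ * Real.sin θ ∧
      0 < deriv a t * b t * Real.cos θ ^ 2 + a t * deriv b t * Real.sin θ ^ 2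
            + (a t ^ 2 - b t ^ 2) * Real.cos θ * Real.sin θ := by
  intro t θ
  have hda : HasDerivAt a (deriv a t) t :=
    (ha.differentiable (by norm_num)).differentiableAt.hasDerivAt
  have hdb : HasDerivAt b (deriv b t) t :=
    (hb.differentiable (by norm_num)).differentiableAt.hasDerivAt
  have hXt := (((hda.fun_mul (hasDerivAt_cos t)).mul_const (cos θ)).fun_sub
    ((hdb.fun_mul (hasDerivAt_sin t)).mul_const (sin θ))).deriv
  have hYt := (((hda.fun_mul (hasDerivAt_sin t)).mul_const (cos θ)).fun_add
    ((hdb.fun_mul (hasDerivAt_cos t)).mul_const (sin θ))).deriv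
  have hXθ := (((hasDerivAt_cos θ).const_mul (a t * cos t)).fun_sub
    ((hasDerivAt_sin θ).const_mul (b t * sin t))).deriv
  have hYθ := (((hasDerivAt_cos θ).const_mul (a t * sin t)).fun_add
    ((hasDerivAt_sin θ).const_mul (b t * cos t))).deriv
  constructor
  · simp only [hX, hY]
    rw [hXt, hYt, hXθ, hYθ]
    -- The difference of the two sides is the claimed value times `sin² t + cos² t - 1`.
    linear_combination (deriv a t * b t * cos θ ^ 2 + a t * deriv b t * sin θ ^ 2
      + (a t ^ 2 - b t ^ 2) * cos θ * sin θ) * sin_sq_add_cos_sq t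
  · refine quadForm_pos (mul_pos (ha' t) (hbpos t)) ?_ (cos_sq_add_sin_sq θ)
    linarith [hfol t]
end

section
/- Under the standing hypotheses on a and b, the family of ellipses is strictly nested: for all real numbers t < s, the convex hull of the ellipse E(t) := {M_{a,b}(t,θ) : θ ∈ ℝ} is contained in the interior of the convex hull of the ellipse E(s) := {M_{a,b}(s,θ) : θ ∈ ℝ}. -/
open Filter Real

/-!
Write `u = x cos t + y sin t` and `v = -x sin t + y cos t` for the coordinates of a point `(x, y)`
in the frame of the axes of the ellipse at time `t`, so that the filled ellipse is `{Q ≤ 1}` with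
`Q = u² / a² + v² / b²` (`ellipseForm`). For a fixed point other than the origin, `u' = v` and
`v' = -u`, so the derivative of `Q` in `t` is `-2 / (a³ b³)` times the quadratic form
`a' b³ u² + a b (a² - b²) u v + b' a³ v²`. The hypothesis
`(a² - b²)² < 4 a b a' b'` says exactly that its discriminant is negative, so `Q` is strictly
decreasing in `t` (`ellipseForm_strictAnti`).

A point of the ellipse at time `t` has `Q = 1` at time `t`, hence `Q < 1` at time `s > t`. The set
`{Q < 1}` at time `s` is convex and open, and it lies in the convex hull of the ellipse at time `s`
since each of its points is on a chord `[M s θ, M s (-θ)]`.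
-/

/-- The quadratic form whose unit level set is the ellipse with semi-axes `α`, `β`, the first one
at angle `t` to the horizontal. -/
noncomputable def ellipseForm (α β t : ℝ) (p : ℝ × ℝ) : ℝ :=
  ((p.1 * cos t + p.2 * sin t) / α) ^ 2 + ((-p.1 * sin t + p.2 * cos t) / β) ^ 2

lemma quadratic_pos_of_discrim_neg {A B C u v : ℝ} (hA : 0 < A) (hC : C ^ 2 < 4 * A * B)
    (huv : u ≠ 0 ∨ v ≠ 0) : 0 < A * u ^ 2 + C * u * v + B * v ^ 2 := by
  by_cases hv : v = 0
  · have hu : u ≠ 0 := huv.resolve_right (by simp [hv])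
    subst hv
    have : 0 < A * u ^ 2 := by positivity
    linarith
  · have h1 : 0 < (4 * A * B - C ^ 2) * v ^ 2 := mul_pos (by linarith) (by positivity)
    have h2 : 0 < (4 * A) * (A * u ^ 2 + C * u * v + B * v ^ 2) := by
      nlinarith [sq_nonneg (2 * A * u + C * v)]
    exact pos_of_mul_pos_right h2 (by linarith)

/-- At a fixed point other than the origin, the form decreases strictly in time. -/
lemma ellipseForm_strictAnti {a b : ℝ → ℝ} (ha : ContDiff ℝ 1 a) (hb : ContDiff ℝ 1 b)
    (hapos : ∀ t, 0 < a t) (hbpos : ∀ t, 0 < b t) (ha' : ∀ t, 0 < deriv a t)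
    (hfol : ∀ t, (a t ^ 2 - b t ^ 2) ^ 2 < 4 * a t * b t * deriv a t * deriv b t)
    {p : ℝ × ℝ} (hp : p ≠ 0) : StrictAnti fun t => ellipseForm (a t) (b t) t p := by
  obtain ⟨x, y⟩ := p
  apply strictAnti_of_deriv_neg
  intro t
  have hat := hapos t
  have hbt := hbpos t
  have dA : HasDerivAt a (deriv a t) t := (ha.differentiable (by simp) t).hasDerivAt
  have dB : HasDerivAt b (deriv b t) t := (hb.differentiable (by simp) t).hasDerivAt
  have dU : HasDerivAt (fun τ => x * cos τ + y * sin τ) (x * (-sin t) + y * cos t) t :=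
    ((hasDerivAt_cos t).const_mul x).add ((hasDerivAt_sin t).const_mul y)
  have dV : HasDerivAt (fun τ => -x * sin τ + y * cos τ) (-x * cos t + y * (-sin t)) t :=
    ((hasDerivAt_sin t).const_mul (-x)).add ((hasDerivAt_cos t).const_mul y)
  have dQ := ((dU.div dA hat.ne').pow 2).add ((dV.div dB hbt.ne').pow 2)
  have hd : deriv (fun τ => ellipseForm (a τ) (b τ) τ (x, y)) t = _ := dQ.deriv
  rw [hd]
  obtain ⟨u, hu⟩ : ∃ u, u = x * cos t + y * sin t := ⟨_, rfl⟩
  obtain ⟨v, hv⟩ : ∃ v, v = -x * sin t + y * cos t := ⟨_, rfl⟩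
  have huv : u ≠ 0 ∨ v ≠ 0 := by
    by_contra! h
    apply hp
    have hx : x = u * cos t - v * sin t := by
      rw [hu, hv]; linear_combination (-x) * sin_sq_add_cos_sq t
    have hy : y = u * sin t + v * cos t := by
      rw [hu, hv]; linear_combination (-y) * sin_sq_add_cos_sq t
    simp [hx, hy, h.1, h.2]
  have hpos := quadratic_pos_of_discrim_neg (A := deriv a t * b t ^ 3) (B := deriv b t * a t ^ 3)
    (C := a t * b t * (a t ^ 2 - b t ^ 2)) (mul_pos (ha' t) (by positivity))
    (by
      have := mul_lt_mul_of_pos_left (hfol t) (show 0 < a t ^ 2 * b t ^ 2 by positivity)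
      linarith) huv
  have hu' : x * (-sin t) + y * cos t = v := by rw [hv]; ring
  have hv' : -x * cos t + y * (-sin t) = -u := by rw [hu]; ring
  rw [hu', hv', ← hu, ← hv]
  refine lt_of_eq_of_lt (b := -(2 / (a t ^ 3 * b t ^ 3) * (deriv a t * b t ^ 3 * u ^ 2 +
    a t * b t * (a t ^ 2 - b t ^ 2) * u * v + deriv b t * a t ^ 3 * v ^ 2))) ?_
    (neg_lt_zero.mpr (mul_pos (by positivity) hpos))
  simp only [Pi.div_apply, ← hu, ← hv, Nat.add_one_sub_one, pow_one, Nat.cast_ofNat]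
  field_simp
  ring

lemma convex_ellipseForm_lt_one (α β t : ℝ) : Convex ℝ {p | ellipseForm α β t p < 1} := by
  intro p hp q hq c d hc hd hcd
  simp only [Set.mem_ofPred_eq, ellipseForm, Prod.fst_add, Prod.snd_add, Prod.smul_fst,
    Prod.smul_snd, smul_eq_mul] at *
  obtain ⟨u, hu⟩ : ∃ u, u = (p.1 * cos t + p.2 * sin t) / α := ⟨_, rfl⟩
  obtain ⟨v, hv⟩ : ∃ v, v = (-p.1 * sin t + p.2 * cos t) / β := ⟨_, rfl⟩
  obtain ⟨u', hu'⟩ : ∃ u, u = (q.1 * cos t + q.2 * sin t) / α := ⟨_, rfl⟩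
  obtain ⟨v', hv'⟩ : ∃ v, v = (-q.1 * sin t + q.2 * cos t) / β := ⟨_, rfl⟩
  rw [← hu, ← hv] at hp
  rw [← hu', ← hv'] at hq
  have e1 : ((c * p.1 + d * q.1) * cos t + (c * p.2 + d * q.2) * sin t) / α = c * u + d * u' := by
    rw [hu, hu']; ring
  have e2 : (-(c * p.1 + d * q.1) * sin t + (c * p.2 + d * q.2) * cos t) / β = c * v + d * v' := by
    rw [hv, hv']; ring
  rw [e1, e2]
  obtain rfl : d = 1 - c := by linarith
  -- Convexity of the square: the defect is `c (1 - c)` times the squared distance.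
  have h1 : 0 ≤ c * (1 - c) * ((u - u') ^ 2 + (v - v') ^ 2) := by positivity
  have h2 : c * (u ^ 2 + v ^ 2) + (1 - c) * (u' ^ 2 + v' ^ 2) < 1 := by
    rcases hc.eq_or_lt with rfl | hc
    · linarith
    · nlinarith
  linarith

lemma isOpen_ellipseForm_lt_one (α β t : ℝ) : IsOpen {p | ellipseForm α β t p < 1} := by
  apply isOpen_lt _ continuous_const
  unfold ellipseForm
  fun_prop

/-- In normalised frame coordinates `(X, Y)` of the open unit disc, with `X = cos θ`, the point
divides the vertical chord from `(cos θ, sin θ)` to `(cos θ, -sin θ)`. -/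
lemma ellipseForm_lt_one_subset {α β t : ℝ} (hα : 0 < α) (hβ : 0 < β) {m : ℝ → ℝ × ℝ}
    (hm : ∀ θ, m θ = (α * cos t * cos θ - β * sin t * sin θ,
      α * sin t * cos θ + β * cos t * sin θ)) :
    {p | ellipseForm α β t p < 1} ⊆ convexHull ℝ {p | ∃ θ, m θ = p} := by
  rintro ⟨x, y⟩ hp
  simp only [Set.mem_ofPred_eq, ellipseForm] at hp
  obtain ⟨X, hX⟩ : ∃ X, X = (x * cos t + y * sin t) / α := ⟨_, rfl⟩
  obtain ⟨Y, hY⟩ : ∃ Y, Y = (-x * sin t + y * cos t) / β := ⟨_, rfl⟩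
  rw [← hX, ← hY] at hp
  have hX1 : α * X = x * cos t + y * sin t := by rw [hX]; field_simp
  have hY1 : β * Y = -x * sin t + y * cos t := by rw [hY]; field_simp
  have hcos : cos (arccos X) = X := cos_arccos (by nlinarith) (by nlinarith)
  have hsin : sin (arccos X) = √(1 - X ^ 2) := sin_arccos X
  obtain ⟨w, hw⟩ : ∃ w, w = √(1 - X ^ 2) := ⟨_, rfl⟩
  have hwpos : 0 < w := by rw [hw]; exact sqrt_pos.mpr (by nlinarith)
  have hwsq : w ^ 2 = 1 - X ^ 2 := by rw [hw]; exact sq_sqrt (by nlinarith)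
  rw [← hw] at hsin
  have hYw : |Y| ≤ w := abs_le_of_sq_le_sq (by linarith) hwpos.le
  obtain ⟨hY2, hY3⟩ := abs_le.mp hYw
  have hseg := (convex_convexHull ℝ {p | ∃ θ, m θ = p})
    (subset_convexHull ℝ _ ⟨arccos X, rfl⟩) (subset_convexHull ℝ _ ⟨-arccos X, rfl⟩)
    (show 0 ≤ (w + Y) / (2 * w) from div_nonneg (by linarith) (by linarith))
    (show 0 ≤ (w - Y) / (2 * w) from div_nonneg (by linarith) (by linarith))
    (by field_simp; ring)
  convert hseg using 1
  simp only [hm, cos_neg, sin_neg, hcos, hsin, Prod.smul_mk, Prod.mk_add_mk, smul_eq_mul]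
  have hx : x = α * X * cos t - β * Y * sin t := by
    rw [hX1, hY1]; linear_combination (-x) * sin_sq_add_cos_sq t
  have hy : y = α * X * sin t + β * Y * cos t := by
    rw [hX1, hY1]; linear_combination (-y) * sin_sq_add_cos_sq t
  ext
  · simp only
    rw [hx]; field_simp; ring
  · simp only
    rw [hy]; field_simp; ring

theorem ellipses_strictly_nested
    (a b : ℝ → ℝ)
    (ha : ContDiff ℝ 1 a) (hb : ContDiff ℝ 1 b)
    (hbpos : ∀ t, 0 < b t) (hba : ∀ t, b t ≤ a t)
    (ha' : ∀ t, 0 < deriv a t) (hb' : ∀ t, 0 < deriv b t)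
    (haBot : Tendsto a atBot (nhds 0)) (hbBot : Tendsto b atBot (nhds 0))
    (haTop : Tendsto a atTop atTop) (hbTop : Tendsto b atTop atTop)
    (hfol : ∀ t, (a t ^ 2 - b t ^ 2) ^ 2 < 4 * a t * b t * deriv a t * deriv b t)
    (M : ℝ → ℝ → ℝ × ℝ)
    (hM : ∀ t θ, M t θ =
      (a t * Real.cos t * Real.cos θ - b t * Real.sin t * Real.sin θ,
       a t * Real.sin t * Real.cos θ + b t * Real.cos t * Real.sin θ)) :
    ∀ t s : ℝ, t < s →
      convexHull ℝ {p : ℝ × ℝ | ∃ θ : ℝ, M t θ = p}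
        ⊆ interior (convexHull ℝ {p : ℝ × ℝ | ∃ θ : ℝ, M s θ = p}) := by
  intro t s hts
  have hapos : ∀ τ, 0 < a τ := fun τ => (hbpos τ).trans_le (hba τ)
  have hsub : {p | ellipseForm (a s) (b s) s p < 1} ⊆
      interior (convexHull ℝ {p : ℝ × ℝ | ∃ θ : ℝ, M s θ = p}) :=
    interior_maximal (ellipseForm_lt_one_subset (hapos s) (hbpos s) (hM s))
      (isOpen_ellipseForm_lt_one _ _ _)
  refine (convexHull_min ?_ (convex_ellipseForm_lt_one _ _ _)).trans hsub
  rintro p ⟨θ, rfl⟩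
  have hone : ellipseForm (a t) (b t) t (M t θ) = 1 := by
    have hat := (hapos t).ne'
    have hbt := (hbpos t).ne'
    have e1 : (M t θ).1 * cos t + (M t θ).2 * sin t = a t * cos θ := by
      rw [hM]; linear_combination (a t * cos θ) * sin_sq_add_cos_sq t
    have e2 : -(M t θ).1 * sin t + (M t θ).2 * cos t = b t * sin θ := by
      rw [hM]; linear_combination (b t * sin θ) * sin_sq_add_cos_sq t
    rw [ellipseForm, e1, e2, mul_div_cancel_left₀ _ hat, mul_div_cancel_left₀ _ hbt,
      cos_sq_add_sin_sq]
  have hne : M t θ ≠ 0 := by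
    intro h
    simp [h, ellipseForm] at hone
  exact (ellipseForm_strictAnti ha hb hapos hbpos ha' hfol hne hts).trans_eq hone
end

section
/- Let τ ∈ (0, 1/10) and α ∈ ℝ. Then the function G_α : (0, +∞) → ℝ defined by G_α(λ) = λ^τ · √(1 + cos²(τ · log λ − α)) is concave on (0, +∞). -/
open Real

/-!
Write `θ = τ log λ - α` and `h = √(1 + cos² θ)`, so that `G = λ^τ h`. Since `dθ/dλ = τ/λ`,
differentiating twice gives `G' = τ λ^(τ-1) (h + h')` and
`G'' = τ λ^(τ-2) ((τ - 1) (h + h') + τ (h' + h''))`, with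
`h' = -cos θ sin θ / h` and `h'' = (sin² θ - cos² θ) / h - cos² θ sin² θ / h³`.
After multiplication by `h`, the bracket is at most
`-(1 + c² - c s) + τ (2 - c² - 2 c s)` with `c = cos θ`, `s = sin θ`. This is negative for
`τ < 1/10`, because `1 + c² - c s ≥ 1/2` and `2 - c² - 2 c s ≤ 3`.
-/

/-- The sign of the second derivative: here `c`, `s`, `h` stand for `cos θ`, `sin θ`,
`√(1 + cos² θ)`. -/
lemma bracket_nonpos (τ c s h : ℝ) (h0 : 0 < τ) (h1 : τ < 1 / 10) (hcs : s ^ 2 + c ^ 2 = 1)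
    (hh : 0 < h) (hsq : h ^ 2 = 1 + c ^ 2) :
    (τ - 1) * (h + -(c * s) / h)
      + τ * (-(c * s) / h + ((s ^ 2 - c ^ 2) / h - c ^ 2 * s ^ 2 / h ^ 3)) ≤ 0 := by
  have hlow : 1 / 2 ≤ 1 + c ^ 2 - c * s := by nlinarith [sq_nonneg (c - s), sq_nonneg c]
  have hup : 2 - c ^ 2 - 2 * (c * s) ≤ 3 := by nlinarith [sq_nonneg (c + s), sq_nonneg c]
  have key : -(1 + c ^ 2 - c * s) + τ * (2 - c ^ 2 - 2 * (c * s)) ≤ 0 := by nlinarith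
  have e : (τ - 1) * (h + -(c * s) / h)
      + τ * (-(c * s) / h + ((s ^ 2 - c ^ 2) / h - c ^ 2 * s ^ 2 / h ^ 3))
      = (-(1 + c ^ 2 - c * s) + τ * (2 - c ^ 2 - 2 * (c * s))) / h
        - τ * (c ^ 2 * s ^ 2 / h ^ 3) := by
    have : h = (1 + c ^ 2) / h := by rw [← hsq]; field_simp
    have e1 : (τ - 1) * (h + -(c * s) / h) = (τ - 1) * ((1 + c ^ 2) / h + -(c * s) / h) := by
      rw [← this]
    rw [e1, show s ^ 2 - c ^ 2 = 1 - 2 * c ^ 2 by linarith]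
    ring
  rw [e]
  have : 0 ≤ τ * (c ^ 2 * s ^ 2 / h ^ 3) := by positivity
  have := div_nonpos_of_nonpos_of_nonneg key hh.le
  linarith

lemma hasDerivAt_h (t : ℝ) :
    HasDerivAt (fun t => √(1 + cos t ^ 2)) (-(cos t * sin t) / √(1 + cos t ^ 2)) t := by
  have hp : 0 < 1 + cos t ^ 2 := by positivity
  have := (((hasDerivAt_cos t).pow 2).const_add 1).sqrt hp.ne'
  refine this.congr_deriv ?_
  have := (sqrt_pos.2 hp).ne'
  simp only [Pi.pow_apply, Nat.cast_ofNat, Nat.add_one_sub_one, pow_one]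
  field_simp

lemma hasDerivAt_h' (t : ℝ) :
    HasDerivAt (fun t => -(cos t * sin t) / √(1 + cos t ^ 2))
      ((sin t ^ 2 - cos t ^ 2) / √(1 + cos t ^ 2)
        - cos t ^ 2 * sin t ^ 2 / √(1 + cos t ^ 2) ^ 3) t := by
  have hp : 0 < √(1 + cos t ^ 2) := sqrt_pos.2 (by positivity)
  have := (((hasDerivAt_cos t).mul (hasDerivAt_sin t)).neg).div (hasDerivAt_h t) hp.ne'
  refine this.congr_deriv ?_
  simp only [Pi.neg_apply, Pi.mul_apply]
  field_simp
  ring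

/-- Differentiation of `λ^p k(τ log λ - α)`, used for both `G` and `G'`. -/
lemma hasDerivAt_rpow_mul_comp {k : ℝ → ℝ} {k' : ℝ} (τ α p x : ℝ) (hx : 0 < x)
    (hk : HasDerivAt k k' (τ * log x - α)) :
    HasDerivAt (fun y => y ^ p * k (τ * log y - α))
      (x ^ (p - 1) * (p * k (τ * log x - α) + τ * k')) x := by
  have h1 : HasDerivAt (fun y => τ * log y - α) (τ * x⁻¹) x :=
    ((hasDerivAt_log hx.ne').const_mul τ).sub_const α
  have h2 := (hasDerivAt_rpow_const (p := p) (Or.inl hx.ne')).mul (hk.comp x h1)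
  refine h2.congr_deriv ?_
  simp only [Function.comp_apply]
  have : x ^ p = x ^ (p - 1) * x := by
    rw [rpow_sub_one hx.ne']; field_simp
  rw [this]
  field_simp

theorem support_function_concave (τ α : ℝ) (hτ : τ ∈ Set.Ioo (0:ℝ) (1/10)) :
    ConcaveOn ℝ (Set.Ioi (0:ℝ))
      (fun lam : ℝ => lam ^ τ * Real.sqrt (1 + Real.cos (τ * Real.log lam - α) ^ 2)) := by
  obtain ⟨h0, h1⟩ := hτ
  have d1 := fun (x : ℝ) (hx : 0 < x) =>
    hasDerivAt_rpow_mul_comp τ α τ x hx (hasDerivAt_h (τ * log x - α))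
  have d2 := fun (x : ℝ) (hx : 0 < x) =>
    hasDerivAt_rpow_mul_comp τ α (τ - 1) x hx
      (((hasDerivAt_h (τ * log x - α)).const_mul τ).add
        ((hasDerivAt_h' (τ * log x - α)).const_mul τ))
  refine concaveOn_of_hasDerivWithinAt2_nonpos (convex_Ioi 0)
    (fun x hx => (d1 x hx).continuousAt.continuousWithinAt)
    (fun x hx => (d1 x (by simpa using hx)).hasDerivWithinAt)
    (fun x hx => (d2 x (by simpa using hx)).hasDerivWithinAt) ?_
  intro x hx
  have hx : 0 < x := by simpa using hx
  have hp : 0 < 1 + cos (τ * log x - α) ^ 2 := by positivity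
  have hb := bracket_nonpos τ (cos (τ * log x - α)) (sin (τ * log x - α)) _ h0 h1
    (sin_sq_add_cos_sq _) (sqrt_pos.2 hp) (sq_sqrt hp.le)
  refine mul_nonpos_of_nonneg_of_nonpos (rpow_nonneg hx.le _) ?_
  have := mul_nonpos_of_nonneg_of_nonpos h0.le hb
  simp only [Pi.add_apply]
  linarith
end

section
/- Let τ ∈ (0, 1/10) and let f : ℝ² → ℝ satisfy f(0,0) = 0 and f(M(t,θ)) = exp(t/τ) for all (t,θ) ∈ ℝ². Then f is convex on ℝ², f(p) > 0 for every p ≠ (0,0), and the origin is the unique minimizer of f. -/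
/-!
Write `M t θ = e^t R(t) E(θ)`, where `R(t)` is the rotation by `t` and `E(θ) = (√2 cos θ, sin θ)`
runs over an ellipse. The function `f` is convex because it has a supporting affine function at
every point; at the origin this is the constant `0`. The map `e^s R(s)` multiplies `f` by
`e^{s/τ}`, so away from the origin it suffices to look at a point `E(θ₀)`.

There the candidate gradient is `λ n` with `n = (cos θ₀ / √2, sin θ₀)` the normal of the ellipse
and `λ = N / (1 + a)`, `N = 1/τ`, `a = cos θ₀ sin θ₀ / √2`. Maximising `n · M t θ` over `θ` by
Cauchy-Schwarz leaves the one-variable inequality `1 + λ (e^t √Q(t) - 1) ≤ e^{N t}`, where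
`Q = w₁² + w₂²` and `w` solves `w₁' = √2 w₂`, `w₂' = -w₁/√2`, `w(0) = (cos θ₀, sin θ₀)`
(`support_ineq`). Both sides agree at `t = 0`. The derivative of their difference is a positive
multiple of `1 + a - k(t)`, with `k(t) = e^{-(N-1)t} (Q + Q'/2)/√Q`, `k(0) = 1 + a`, and `k` is
antitone because `N ≥ 10` (`poly_ineq`, `slope_antitone`). Hence the difference has its minimum at
`t = 0`.
-/

open Real

/-- First coordinate of the solution of `w₁' = √2 w₂`, `w₂' = -w₁/√2` with `w(0) = (c, s)`. -/
noncomputable def wA (c s t : ℝ) : ℝ := c * cos t + √2 * s * sin t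

/-- Second coordinate of the solution of `w₁' = √2 w₂`, `w₂' = -w₁/√2` with `w(0) = (c, s)`. -/
noncomputable def wB (c s t : ℝ) : ℝ := s * cos t - √2 / 2 * c * sin t

/-- The squared length `w₁² + w₂²`. -/
noncomputable def wQ (c s t : ℝ) : ℝ := wA c s t ^ 2 + wB c s t ^ 2

/-- The combination `Q + Q'/2`, so that `(e^t √Q)' = e^t P / √Q`. -/
noncomputable def wP (c s t : ℝ) : ℝ := wQ c s t + √2 / 2 * wA c s t * wB c s t

lemma sq_two : √2 * √2 = 2 := mul_self_sqrt (by norm_num)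

lemma wA_deriv (c s t : ℝ) : HasDerivAt (wA c s) (√2 * wB c s t) t := by
  have h := ((hasDerivAt_cos t).const_mul c).add ((hasDerivAt_sin t).const_mul (√2 * s))
  refine h.congr_deriv ?_
  unfold wB
  linear_combination (c * sin t / 2) * sq_two

lemma wB_deriv (c s t : ℝ) : HasDerivAt (wB c s) (-(√2 / 2 * wA c s t)) t := by
  have h := ((hasDerivAt_cos t).const_mul s).sub ((hasDerivAt_sin t).const_mul (√2 / 2 * c))
  refine h.congr_deriv ?_
  unfold wA
  linear_combination (s * sin t / 2) * sq_two

lemma wQ_deriv (c s t : ℝ) : HasDerivAt (wQ c s) (√2 * wA c s t * wB c s t) t := by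
  have h := ((wA_deriv c s t).pow 2).add ((wB_deriv c s t).pow 2)
  refine h.congr_deriv ?_
  push_cast
  ring

lemma wP_deriv (c s t : ℝ) : HasDerivAt (wP c s)
    (√2 * wA c s t * wB c s t + wB c s t ^ 2 - wA c s t ^ 2 / 2) t := by
  have h := (wQ_deriv c s t).add (((wA_deriv c s t).const_mul (√2 / 2)).mul (wB_deriv c s t))
  refine h.congr_deriv ?_
  linear_combination (wB c s t ^ 2 / 2 - wA c s t ^ 2 / 4) * sq_two

lemma abs_cross_le (x y : ℝ) : |√2 / 2 * x * y| ≤ (x ^ 2 + y ^ 2) / 2 := by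
  apply abs_le_of_sq_le_sq _ (by positivity)
  have h := sq_two
  have : (√2 / 2 * x * y) ^ 2 = x ^ 2 * y ^ 2 / 2 := by
    linear_combination (x ^ 2 * y ^ 2 / 4) * h
  rw [this]
  nlinarith [sq_nonneg (x ^ 2 - y ^ 2), mul_nonneg (sq_nonneg x) (sq_nonneg y)]

/-- The inequality `P' Q - P Q'/2 ≤ (N - 1) P Q` behind the monotonicity of `k`, with
`x = w₁`, `y = w₂`. -/
lemma poly_ineq (N x y : ℝ) (hN : 10 ≤ N) :
    (√2 * x * y + y ^ 2 - x ^ 2 / 2) * (x ^ 2 + y ^ 2)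
      - (x ^ 2 + y ^ 2 + √2 / 2 * x * y) * (√2 / 2 * x * y)
      ≤ (N - 1) * ((x ^ 2 + y ^ 2 + √2 / 2 * x * y) * (x ^ 2 + y ^ 2)) := by
  obtain ⟨h1, h2⟩ := abs_le.1 (abs_cross_le x y)
  have e : √2 * x * y = 2 * (√2 / 2 * x * y) := by ring
  rw [e]
  set m := √2 / 2 * x * y
  have hx := sq_nonneg x
  have hy := sq_nonneg y
  generalize hQ : x ^ 2 + y ^ 2 = Q at *
  have hQ0 : 0 ≤ Q := by linarith
  have a1 : (2 * m + y ^ 2 - x ^ 2 / 2) * Q ≤ (2 * Q) * Q :=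
    mul_le_mul_of_nonneg_right (by linarith) hQ0
  have a2 : 9 * ((Q + m) * Q) ≤ (N - 1) * ((Q + m) * Q) :=
    mul_le_mul_of_nonneg_right (by linarith) (mul_nonneg (by linarith) hQ0)
  nlinarith [mul_nonneg (by linarith : 0 ≤ Q + 2 * m) hQ0,
    mul_nonneg (by linarith : 0 ≤ m + Q / 2) (by linarith : 0 ≤ Q / 2 - m)]

lemma wQ_pos (c s t : ℝ) (h : c ^ 2 + s ^ 2 = 1) : 0 < wQ c s t := by
  have hs := sin_sq_add_cos_sq t
  have hr := sq_two
  by_contra hle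
  have h0 : wA c s t ^ 2 + wB c s t ^ 2 = 0 := le_antisymm (not_lt.1 hle) (by positivity)
  have hA : wA c s t = 0 := by nlinarith [sq_nonneg (wA c s t), sq_nonneg (wB c s t)]
  have hB : wB c s t = 0 := by nlinarith [sq_nonneg (wA c s t), sq_nonneg (wB c s t)]
  -- The flow `w(0) ↦ w(t)` is invertible, so `w(t) = 0` forces `(c, s) = 0`.
  have hc : c = 0 := by
    have : c = cos t * wA c s t - √2 * sin t * wB c s t := by
      unfold wA wB
      linear_combination (-c) * hs - (c * sin t ^ 2 / 2) * hr
    rw [this, hA, hB]; ring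
  have hs' : s = 0 := by
    have : s = √2 / 2 * sin t * wA c s t + cos t * wB c s t := by
      unfold wA wB
      linear_combination (-s) * hs - (s * sin t ^ 2 / 2) * hr
    rw [this, hA, hB]; ring
  rw [hc, hs'] at h
  norm_num at h

/-- The function `k(t) = e^{-(N-1)t} (Q + Q'/2)/√Q` is antitone. -/
lemma slope_antitone (N c s : ℝ) (hN : 10 ≤ N) (h : c ^ 2 + s ^ 2 = 1) :
    Antitone fun t => exp (-(N - 1) * t) * (wP c s t / √(wQ c s t)) := by
  have hd : ∀ t, HasDerivAt (fun t => exp (-(N - 1) * t) * (wP c s t / √(wQ c s t))) _ t :=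
    fun t => (((hasDerivAt_id t).const_mul (-(N - 1))).exp).mul
      ((wP_deriv c s t).div ((wQ_deriv c s t).sqrt (wQ_pos c s t h).ne')
        (sqrt_pos.2 (wQ_pos c s t h)).ne')
  refine antitone_of_hasDerivAt_nonpos hd fun t => ?_
  have hQ := wQ_pos c s t h
  have hp := poly_ineq N (wA c s t) (wB c s t) hN
  have hq : 0 < √(wQ c s t) := sqrt_pos.2 hQ
  have hq2 : √(wQ c s t) ^ 2 = wQ c s t := sq_sqrt hQ.le
  have eP : wP c s t = wQ c s t + √2 / 2 * wA c s t * wB c s t := rfl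
  have eQ : wA c s t ^ 2 + wB c s t ^ 2 = wQ c s t := rfl
  rw [eQ, ← eP] at hp
  simp only [id]
  set q := √(wQ c s t)
  set E := exp (-(N - 1) * t)
  have key : E * (-(N - 1) * 1) * (wP c s t / q) +
      E * (((√2 * wA c s t * wB c s t + wB c s t ^ 2 - wA c s t ^ 2 / 2) * q -
        wP c s t * (√2 * wA c s t * wB c s t / (2 * q))) / q ^ 2)
      = E / q ^ 3 * ((√2 * wA c s t * wB c s t + wB c s t ^ 2 - wA c s t ^ 2 / 2) * wQ c s t
        - wP c s t * (√2 / 2 * wA c s t * wB c s t) - (N - 1) * (wP c s t * wQ c s t)) := by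
    rw [← hq2]
    field_simp
    ring
  rw [key]
  exact mul_nonpos_of_nonneg_of_nonpos (by positivity) (by linarith)

lemma one_add_pos (c s : ℝ) (h : c ^ 2 + s ^ 2 = 1) :
    1 / 2 ≤ 1 + √2 / 2 * c * s ∧ 1 + √2 / 2 * c * s ≤ 3 / 2 := by
  have := abs_le.1 (abs_cross_le c s)
  rw [h] at this
  constructor <;> linarith

lemma support_ineq (N c s t : ℝ) (hN : 10 ≤ N) (h : c ^ 2 + s ^ 2 = 1) :
    1 + N / (1 + √2 / 2 * c * s) * (exp t * √(wQ c s t) - 1) ≤ exp (N * t) := by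
  have ha : 0 < 1 + √2 / 2 * c * s := by linarith [(one_add_pos c s h).1]
  set a := 1 + √2 / 2 * c * s with ha'
  set k : ℝ → ℝ := fun t => exp (-(N - 1) * t) * (wP c s t / √(wQ c s t)) with hk
  have hQ0 : wQ c s 0 = 1 := by simp [wQ, wA, wB, h]
  have hP0 : wP c s 0 = a := by simp [wP, hQ0, wA, wB, ha']
  have hk0 : k 0 = a := by simp [hk, hQ0, hP0]
  have hanti : Antitone k := slope_antitone N c s hN h
  let F : ℝ → ℝ := fun t => exp (N * t) - N / a * (exp t * √(wQ c s t))
  have hF : ∀ t, HasDerivAt F (N * exp (N * t) / a * (a - k t)) t := by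
    intro t
    have hq : 0 < √(wQ c s t) := sqrt_pos.2 (wQ_pos c s t h)
    have hq2 : √(wQ c s t) ^ 2 = wQ c s t := sq_sqrt (wQ_pos c s t h).le
    have h1 := (((hasDerivAt_id t).const_mul N).exp).sub
      (((hasDerivAt_exp t).mul
        ((wQ_deriv c s t).sqrt (wQ_pos c s t h).ne')).const_mul (N / a))
    refine h1.congr_deriv ?_
    have hE : exp (N * t) * exp (-(N - 1) * t) = exp t := by
      rw [← exp_add]; ring_nf
    have hP : wP c s t = √(wQ c s t) ^ 2 + √2 / 2 * wA c s t * wB c s t := by rw [hq2]; rfl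
    simp only [hk, id]
    rw [hP]
    have e2 : N * exp (N * t) / a * (a - exp (-(N - 1) * t) *
        ((√(wQ c s t) ^ 2 + √2 / 2 * wA c s t * wB c s t) / √(wQ c s t)))
      = N * exp (N * t) - N / a * (exp (N * t) * exp (-(N - 1) * t)) *
        ((√(wQ c s t) ^ 2 + √2 / 2 * wA c s t * wB c s t) / √(wQ c s t)) := by
      field_simp
    rw [e2, hE]
    field_simp
  have hF0 : F 0 = 1 - N / a := by simp [F, hQ0]
  have hcont : Continuous F := continuous_iff_continuousAt.2 fun t => (hF t).continuousAt
  have hmin : F 0 ≤ F t := by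
    rcases le_total 0 t with ht | ht
    · refine monotoneOn_of_hasDerivWithinAt_nonneg (convex_Ici (0:ℝ)) hcont.continuousOn
        (fun x _ => (hF x).hasDerivWithinAt) (fun x hx => ?_)
        Set.self_mem_Ici ht ht
      have hx0 : 0 ≤ x := Set.mem_Ici.1 (interior_subset hx)
      have := hanti hx0
      exact mul_nonneg (by positivity) (by linarith)
    · refine antitoneOn_of_hasDerivWithinAt_nonpos (convex_Iic (0:ℝ)) hcont.continuousOn
        (fun x _ => (hF x).hasDerivWithinAt) (fun x hx => ?_)
        ht Set.self_mem_Iic ht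
      have hx0 : x ≤ 0 := Set.mem_Iic.1 (interior_subset hx)
      have := hanti hx0
      exact mul_nonpos_of_nonneg_of_nonpos (by positivity) (by linarith)
  rw [hF0] at hmin
  simp only [F] at hmin
  linarith

lemma exists_angle_s6 (x y : ℝ) (h : x ^ 2 + y ^ 2 = 1) : ∃ θ, cos θ = x ∧ sin θ = y := by
  have hn : ‖(⟨x, y⟩ : ℂ)‖ = 1 := by
    rw [Complex.norm_def, Complex.normSq_mk, ← sq, ← sq, h, sqrt_one]
  refine ⟨Complex.arg ⟨x, y⟩, ?_, ?_⟩
  · rw [Complex.cos_arg (by intro h0; rw [h0] at hn; simp at hn), hn]; simp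
  · rw [Complex.sin_arg, hn]; simp

/-- Surjectivity of `M` onto the punctured plane: the intermediate value theorem gives the `t` for
which the point lies on the ellipse `e^t R(t) E`. -/
lemma exists_coords (x y : ℝ) (h : (x, y) ≠ ((0, 0) : ℝ × ℝ)) : ∃ t θ,
    x = exp t * (√2 * cos t * cos θ - sin t * sin θ) ∧
    y = exp t * (√2 * sin t * cos θ + cos t * sin θ) := by
  have hr := sq_two
  have hpos : 0 < x ^ 2 + y ^ 2 := by
    by_contra hle
    apply h
    have hx : x = 0 := by nlinarith [sq_nonneg x, sq_nonneg y]
    have hy : y = 0 := by nlinarith [sq_nonneg x, sq_nonneg y]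
    rw [hx, hy]
  let u : ℝ → ℝ := fun t => cos t * x + sin t * y
  let v : ℝ → ℝ := fun t => -sin t * x + cos t * y
  have huv : ∀ t, u t ^ 2 + v t ^ 2 = x ^ 2 + y ^ 2 := fun t => by
    simp only [u, v]
    linear_combination (x ^ 2 + y ^ 2) * sin_sq_add_cos_sq t
  let g : ℝ → ℝ := fun t => exp (2 * t) - (u t ^ 2 / 2 + v t ^ 2)
  have hg : Continuous g := by fun_prop
  have e1 : exp (2 * (log ((x ^ 2 + y ^ 2) / 2) / 2)) = (x ^ 2 + y ^ 2) / 2 := by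
    rw [mul_div_cancel₀ _ (two_ne_zero), exp_log (by positivity)]
  have e2 : exp (2 * (log (x ^ 2 + y ^ 2) / 2)) = x ^ 2 + y ^ 2 := by
    rw [mul_div_cancel₀ _ (two_ne_zero), exp_log (by positivity)]
  obtain ⟨t, ht⟩ : ∃ t, g t = 0 := by
    refine mem_range_of_exists_le_of_exists_ge hg
      ⟨log ((x ^ 2 + y ^ 2) / 2) / 2, ?_⟩ ⟨log (x ^ 2 + y ^ 2) / 2, ?_⟩
    · simp only [g]; rw [e1]
      nlinarith [huv (log ((x ^ 2 + y ^ 2) / 2) / 2),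
        sq_nonneg (v (log ((x ^ 2 + y ^ 2) / 2) / 2))]
    · simp only [g]; rw [e2]
      nlinarith [huv (log (x ^ 2 + y ^ 2) / 2), sq_nonneg (u (log (x ^ 2 + y ^ 2) / 2))]
  have hE : exp t * exp (-t) = 1 := by rw [← exp_add]; simp
  have hE2 : exp (2 * t) = exp t ^ 2 := by rw [← exp_nat_mul]; norm_num
  have ht' : exp t ^ 2 = u t ^ 2 / 2 + v t ^ 2 := by
    simp only [g] at ht; rw [hE2] at ht; linarith
  obtain ⟨θ, hc, hs⟩ := exists_angle_s6 (exp (-t) * (√2 / 2 * u t)) (exp (-t) * v t) (by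
    have : (exp (-t) * (√2 / 2 * u t)) ^ 2 + (exp (-t) * v t) ^ 2
        = exp (-t) ^ 2 * (u t ^ 2 / 2 + v t ^ 2) := by
      linear_combination (exp (-t) ^ 2 * u t ^ 2 / 4) * hr
    rw [this, ← ht', ← mul_pow, mul_comm, hE, one_pow])
  have hu : exp t * (√2 * cos θ) = u t := by
    rw [hc]; linear_combination (√2 * √2 / 2 * u t) * hE + u t / 2 * hr
  have hv : exp t * sin θ = v t := by
    rw [hs]; linear_combination (v t) * hE
  have hsc := sin_sq_add_cos_sq t
  refine ⟨t, θ, ?_, ?_⟩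
  · have : exp t * (√2 * cos t * cos θ - sin t * sin θ) = cos t * u t - sin t * v t := by
      rw [← hu, ← hv]; ring
    rw [this]; simp only [u, v]; linear_combination (-x) * hsc
  · have : exp t * (√2 * sin t * cos θ + cos t * sin θ) = sin t * u t + cos t * v t := by
      rw [← hu, ← hv]; ring
    rw [this]; simp only [u, v]; linear_combination (-y) * hsc

/-- A function on the plane with an affine minorant touching it at every point is convex. -/
lemma convex_of_support (f : ℝ × ℝ → ℝ)
    (h : ∀ z : ℝ × ℝ, ∃ A B : ℝ, ∀ p : ℝ × ℝ,
      f z + (A * (p.1 - z.1) + B * (p.2 - z.2)) ≤ f p) : ConvexOn ℝ Set.univ f := by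
  refine ⟨convex_univ, fun x _ y _ a b ha hb hab => ?_⟩
  obtain ⟨A, B, hAB⟩ := h (a • x + b • y)
  have h1 := mul_le_mul_of_nonneg_left (hAB x) ha
  have h2 := mul_le_mul_of_nonneg_left (hAB y) hb
  simp only [Prod.fst_add, Prod.snd_add, Prod.smul_fst, Prod.smul_snd, smul_eq_mul] at *
  have hb' : b = 1 - a := by linarith
  subst hb'
  nlinarith [h1, h2]

theorem constructed_function_convex (τ : ℝ) (hτ : τ ∈ Set.Ioo (0:ℝ) (1/10))
    (M : ℝ → ℝ → ℝ × ℝ)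
    (hM : ∀ t θ, M t θ =
      (Real.exp t * (Real.sqrt 2 * Real.cos t * Real.cos θ - Real.sin t * Real.sin θ),
       Real.exp t * (Real.sqrt 2 * Real.sin t * Real.cos θ + Real.cos t * Real.sin θ)))
    (f : ℝ × ℝ → ℝ)
    (hf0 : f (0, 0) = 0)
    (hfM : ∀ t θ, f (M t θ) = Real.exp (t / τ)) :
    ConvexOn ℝ Set.univ f ∧
    (∀ p : ℝ × ℝ, p ≠ (0, 0) → 0 < f p) ∧
    (∀ p : ℝ × ℝ, p ≠ (0, 0) → f (0, 0) < f p) := by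
  obtain ⟨hτ0, hτ1⟩ := hτ
  have hsurj : ∀ p : ℝ × ℝ, p ≠ (0, 0) → ∃ t θ, p = M t θ := by
    rintro ⟨x, y⟩ hp
    obtain ⟨t, θ, h1, h2⟩ := exists_coords x y hp
    exact ⟨t, θ, by rw [hM, ← h1, ← h2]⟩
  have hpos : ∀ p : ℝ × ℝ, p ≠ (0, 0) → 0 < f p := by
    intro p hp
    obtain ⟨t, θ, rfl⟩ := hsurj p hp
    rw [hfM]; exact exp_pos _
  refine ⟨convex_of_support f fun z => ?_, hpos, fun p hp => hf0.trans_lt (hpos p hp)⟩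
  by_cases hz : z = (0, 0)
  · refine ⟨0, 0, fun p => ?_⟩
    rw [hz, hf0]
    by_cases hp : p = (0, 0)
    · rw [hp, hf0]; simp
    · simpa using (hpos p hp).le
  obtain ⟨t₀, θ₀, rfl⟩ := hsurj z hz
  have hN : 10 ≤ 1 / τ := by
    rw [le_div_iff₀ hτ0]; linarith
  have hcs : cos θ₀ ^ 2 + sin θ₀ ^ 2 = 1 := cos_sq_add_sin_sq θ₀
  obtain ⟨ha1, ha2⟩ := one_add_pos _ _ hcs
  set N := 1 / τ with hNdef
  set c := cos θ₀ with hc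
  set s := sin θ₀ with hs
  set lam := N / (1 + √2 / 2 * c * s) with hlam
  have hlam1 : 1 ≤ lam := by
    rw [hlam, le_div_iff₀ (by linarith)]; linarith
  have hfN : ∀ t θ, f (M t θ) = exp (N * t) := fun t θ => by
    rw [hfM, hNdef]; congr 1; ring
  -- The linear form `p ↦ n · e^{-t₀} R(-t₀) p`, with coefficients `A`, `B`.
  set A := exp (-t₀) * (√2 / 2 * c * cos t₀ - s * sin t₀) with hA
  set B := exp (-t₀) * (√2 / 2 * c * sin t₀ + s * cos t₀) with hB
  have hform : ∀ t θ, A * (M t θ).1 + B * (M t θ).2 =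
      exp (t - t₀) * (cos θ * wA c s (t - t₀) + sin θ * wB c s (t - t₀)) := by
    intro t θ
    have hE : exp (t - t₀) = exp (-t₀) * exp t := by rw [← exp_add]; ring_nf
    rw [hM, hE, hA, hB]
    unfold wA wB
    rw [cos_sub, sin_sub]
    linear_combination (exp (-t₀) * exp t * cos θ * c *
      (cos t * cos t₀ + sin t * sin t₀) / 2) * sq_two
  have hbase : A * (M t₀ θ₀).1 + B * (M t₀ θ₀).2 = 1 := by
    rw [hform, sub_self]
    simp only [wA, wB, exp_zero, cos_zero, sin_zero]
    linear_combination hcs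
  refine ⟨exp (N * t₀) * lam * A, exp (N * t₀) * lam * B, fun p => ?_⟩
  have hval : f (M t₀ θ₀) + (exp (N * t₀) * lam * A * (p.1 - (M t₀ θ₀).1) +
      exp (N * t₀) * lam * B * (p.2 - (M t₀ θ₀).2)) =
      exp (N * t₀) * (1 + lam * (A * p.1 + B * p.2 - 1)) := by
    rw [hfN]
    linear_combination (-exp (N * t₀) * lam) * hbase
  rw [hval]
  by_cases hp : p = (0, 0)
  · rw [hp, hf0]
    refine mul_nonpos_of_nonneg_of_nonpos (exp_pos _).le ?_
    simp only [mul_zero, add_zero]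
    linarith
  obtain ⟨t, θ, rfl⟩ := hsurj p hp
  have hCS : cos θ * wA c s (t - t₀) + sin θ * wB c s (t - t₀) ≤ √(wQ c s (t - t₀)) := by
    apply le_sqrt_of_sq_le
    unfold wQ
    nlinarith [sq_nonneg (cos θ * wB c s (t - t₀) - sin θ * wA c s (t - t₀)),
      sin_sq_add_cos_sq θ]
  have hle : 1 + lam * (A * (M t θ).1 + B * (M t θ).2 - 1) ≤ exp (N * (t - t₀)) := by
    refine le_trans ?_ (support_ineq N c s (t - t₀) hN hcs)
    rw [hform]
    gcongr
  calc _ ≤ exp (N * t₀) * exp (N * (t - t₀)) :=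
        mul_le_mul_of_nonneg_left hle (exp_pos _).le
    _ = f (M t θ) := by rw [hfN, ← exp_add]; ring_nf
end

section
/- Let τ ∈ (0, 1/10) and let f : ℝ² → ℝ be differentiable and satisfy f(0,0) = 0 and f(M(t,θ)) = exp(t/τ) for all (t,θ) ∈ ℝ². Then f satisfies the Łojasiewicz gradient inequality at the origin with exponent 1 − τ: for every p ∈ ℝ², ‖∇f(p)‖ ≥ (τ/√2) · f(p)^{1−τ}. -/
open Real

/-!
Away from the origin every point is `p = M t θ` (`exists_param`). Differentiating
`f (M t θ) = exp (t / τ)` in `t` gives `Df(p) (∂ₜM) = exp (t / τ) / τ`. Since `∂ₜM` is `√2 e^t` times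
a rotation of `(√2 cos θ, sin θ)`, its norm is at most `2 e^t`, so
`‖∇f(p)‖ ≥ exp (t / τ - t) / (2 τ) = f(p) ^ (1 - τ) / (2 τ)`, and `1 / (2 τ) ≥ τ / √2` because
`τ < 1 / 10`. At the origin the left-hand side vanishes.
-/

/-- Surjectivity of the parametrisation onto the punctured plane. After rotating `(a, b)` by `-t` to
`(x, y)`, one needs `x² / 2 + y² = e^{2t}`; the left side lies between `(a² + b²) / 2` and
`a² + b²`, so such a `t` exists by the intermediate value theorem. -/
lemma exists_param (a b : ℝ) (h : 0 < a ^ 2 + b ^ 2) : ∃ t θ : ℝ,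
    a = exp t * (√2 * cos t * cos θ - sin t * sin θ) ∧
    b = exp t * (√2 * sin t * cos θ + cos t * sin θ) := by
  have h2 : √2 ^ 2 = 2 := Real.sq_sqrt (by norm_num)
  have h2pos : 0 < √2 := by positivity
  obtain ⟨t, ht⟩ : ∃ t : ℝ, (cos t * a + sin t * b) ^ 2 / 2 + (-sin t * a + cos t * b) ^ 2
      - exp t ^ 2 = 0 := by
    have hexp : ∀ r : ℝ, 0 < r → exp (log r / 2) ^ 2 = r := by
      intro r hr
      rw [← Real.exp_nat_mul]
      push_cast
      rw [mul_div_cancel₀ _ (by norm_num : (2:ℝ) ≠ 0), Real.exp_log hr]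
    have hrot : ∀ t : ℝ, (cos t * a + sin t * b) ^ 2 + (-sin t * a + cos t * b) ^ 2
        = a ^ 2 + b ^ 2 := by
      intro t
      linear_combination (a ^ 2 + b ^ 2) * Real.sin_sq_add_cos_sq t
    apply mem_range_of_exists_le_of_exists_ge (f := fun t : ℝ =>
      (cos t * a + sin t * b) ^ 2 / 2 + (-sin t * a + cos t * b) ^ 2 - exp t ^ 2)
    · fun_prop
    · refine ⟨log (a ^ 2 + b ^ 2) / 2, ?_⟩
      simp only [hexp _ h]
      linarith [hrot (log (a ^ 2 + b ^ 2) / 2),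
        sq_nonneg (cos (log (a ^ 2 + b ^ 2) / 2) * a + sin (log (a ^ 2 + b ^ 2) / 2) * b)]
    · refine ⟨log ((a ^ 2 + b ^ 2) / 2) / 2, ?_⟩
      simp only [hexp _ (half_pos h)]
      linarith [hrot (log ((a ^ 2 + b ^ 2) / 2) / 2), sq_nonneg
        (-sin (log ((a ^ 2 + b ^ 2) / 2) / 2) * a + cos (log ((a ^ 2 + b ^ 2) / 2) / 2) * b)]
  set z : ℂ := ⟨(cos t * a + sin t * b) / √2, -sin t * a + cos t * b⟩ with hz
  have hnorm : ‖z‖ = exp t := by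
    rw [Complex.norm_eq_sqrt_sq_add_sq, ← Real.sqrt_sq (Real.exp_pos t).le]
    congr 1
    simp only [hz, div_pow, h2]
    linarith
  -- `arg z` is the required angle, since `‖z‖ = e^t`.
  have hc : exp t * cos z.arg = (cos t * a + sin t * b) / √2 := by
    rw [← hnorm, Complex.norm_mul_cos_arg]
  have hs : exp t * sin z.arg = -sin t * a + cos t * b := by
    rw [← hnorm, Complex.norm_mul_sin_arg]
  rw [eq_div_iff h2pos.ne'] at hc
  refine ⟨t, z.arg, ?_, ?_⟩
  · linear_combination (-cos t) * hc + sin t * hs - a * Real.sin_sq_add_cos_sq t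
  · linear_combination (-sin t) * hc - cos t * hs - b * Real.sin_sq_add_cos_sq t

theorem constructed_function_lojasiewicz (τ : ℝ) (hτ : τ ∈ Set.Ioo (0:ℝ) (1/10))
    (M : ℝ → ℝ → EuclideanSpace ℝ (Fin 2))
    (hM : ∀ t θ, M t θ = (WithLp.equiv 2 (Fin 2 → ℝ)).symm
      ![Real.exp t * (Real.sqrt 2 * Real.cos t * Real.cos θ - Real.sin t * Real.sin θ),
        Real.exp t * (Real.sqrt 2 * Real.sin t * Real.cos θ + Real.cos t * Real.sin θ)])
    (f : EuclideanSpace ℝ (Fin 2) → ℝ)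
    (hdiff : Differentiable ℝ f)
    (hf0 : f 0 = 0)
    (hfM : ∀ t θ, f (M t θ) = Real.exp (t / τ)) :
    ∀ p : EuclideanSpace ℝ (Fin 2),
      τ / Real.sqrt 2 * f p ^ (1 - τ) ≤ ‖gradient f p‖ := by
  obtain ⟨hτ0, hτ1⟩ := hτ
  intro p
  have h2 : √2 ^ 2 = 2 := Real.sq_sqrt (by norm_num)
  by_cases hp : p = 0
  · rw [hp, hf0, Real.zero_rpow (by linarith), mul_zero]
    exact norm_nonneg _
  have hpos : 0 < p 0 ^ 2 + p 1 ^ 2 := by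
    have := pow_pos (norm_pos_iff.mpr hp) 2
    rwa [EuclideanSpace.real_norm_sq_eq, Fin.sum_univ_two] at this
  obtain ⟨t, θ, h0, h1⟩ := exists_param (p 0) (p 1) hpos
  have hpM : p = M t θ := by
    rw [hM]
    ext i
    fin_cases i
    · simpa using h0
    · simpa using h1
  set V : EuclideanSpace ℝ (Fin 2) :=
    !₂[exp t * (√2 * cos t * cos θ - sin t * sin θ)
        + exp t * (√2 * (-sin t) * cos θ - cos t * sin θ),
      exp t * (√2 * sin t * cos θ + cos t * sin θ)
        + exp t * (√2 * cos t * cos θ + (-sin t) * sin θ)] with hV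
  have hMV : HasDerivAt (fun s => M s θ) V t := by
    have e : (fun s => M s θ) = fun s => WithLp.toLp 2
      ![exp s * (√2 * cos s * cos θ - sin s * sin θ),
        exp s * (√2 * sin s * cos θ + cos s * sin θ)] := by
      funext s
      rw [hM]
      rfl
    rw [e]
    have hs := Real.hasDerivAt_sin t
    have hc := Real.hasDerivAt_cos t
    have he := Real.hasDerivAt_exp t
    have hpi : HasDerivAt (fun s => ![exp s * (√2 * cos s * cos θ - sin s * sin θ),
        exp s * (√2 * sin s * cos θ + cos s * sin θ)]) V.ofLp t := by
      refine hasDerivAt_pi.2 fun i => ?_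
      fin_cases i
      · exact he.mul (((hc.const_mul √2).mul_const (cos θ)).sub (hs.mul_const (sin θ)))
      · exact he.mul (((hs.const_mul √2).mul_const (cos θ)).add (hc.mul_const (sin θ)))
    exact (PiLp.hasFDerivAt_toLp (𝕜 := ℝ) (E := fun _ : Fin 2 => ℝ) 2 _).comp_hasDerivAt t hpi
  have hVn : ‖V‖ ≤ 2 * exp t := by
    apply le_of_sq_le_sq _ (by positivity)
    rw [EuclideanSpace.real_norm_sq_eq, Fin.sum_univ_two]
    have e : V 0 ^ 2 + V 1 ^ 2 = exp t ^ 2 * (2 * (2 * cos θ ^ 2 + sin θ ^ 2)) := by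
      simp only [hV, PiLp.toLp_apply, Matrix.cons_val_zero, Matrix.cons_val_one]
      linear_combination (exp t ^ 2 * 2 * (√2 ^ 2 * cos θ ^ 2 + sin θ ^ 2)) *
        Real.sin_sq_add_cos_sq t + 2 * exp t ^ 2 * cos θ ^ 2 * h2
    rw [e, mul_pow]
    nlinarith [Real.sin_sq_add_cos_sq θ, mul_nonneg (sq_nonneg (exp t)) (sq_nonneg (sin θ))]
  have hder : fderiv ℝ f p V = exp (t / τ) / τ := by
    have hA : HasDerivAt (fun s => f (M s θ)) (fderiv ℝ f p V) t := by
      have := (hdiff p).hasFDerivAt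
      rw [hpM] at this ⊢
      exact this.comp_hasDerivAt t hMV
    have hB : HasDerivAt (fun s => f (M s θ)) (exp (t / τ) * (1 / τ)) t := by
      simp only [hfM]
      exact ((hasDerivAt_id t).div_const τ).exp
    rw [hA.unique hB]
    ring
  have hgrad : ‖gradient f p‖ = ‖fderiv ℝ f p‖ := by
    rw [gradient, LinearIsometryEquiv.norm_map]
  have hle : exp (t / τ) / τ ≤ ‖gradient f p‖ * (2 * exp t) := by
    rw [hgrad, ← hder]
    exact (le_abs_self _).trans (((fderiv ℝ f p).le_opNorm V).trans (by gcongr))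
  have hfp : f p ^ (1 - τ) * exp t = exp (t / τ) := by
    rw [hpM, hfM, ← Real.exp_mul, ← Real.exp_add]
    congr 1
    field_simp
    ring
  have hfnn : 0 < f p ^ (1 - τ) := by
    rw [hpM, hfM]
    positivity
  have hmain : f p ^ (1 - τ) / τ ≤ 2 * ‖gradient f p‖ := by
    rw [← hfp] at hle
    refine le_of_mul_le_mul_right ?_ (Real.exp_pos t)
    calc _ = f p ^ (1 - τ) * exp t / τ := by ring
      _ ≤ _ := hle
      _ = _ := by ring
  have hcoef : τ / √2 ≤ 1 / τ / 2 := by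
    have h1' : τ / √2 ≤ τ := div_le_self hτ0.le (Real.one_le_sqrt.mpr (by norm_num))
    have h2' : 1 ≤ 1 / τ := by
      rw [le_div_iff₀ hτ0]
      linarith
    linarith
  calc τ / √2 * f p ^ (1 - τ) ≤ 1 / τ / 2 * f p ^ (1 - τ) := by gcongr
    _ = f p ^ (1 - τ) / τ / 2 := by ring
    _ ≤ _ := by linarith
end

section
/- Let τ ∈ (0, 1/10), let f : ℝ² → ℝ satisfy f(0,0) = 0 and f(M(t,θ)) = exp(t/τ) for all (t,θ) ∈ ℝ², and let k be a natural number with k < 1/τ. Then f is k times continuously differentiable on ℝ², and all partial derivatives of f of order at most k vanish at the origin. -/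
/-!
The map `M` sends `(t, θ)` to the image of the ellipse point `(√2 cos θ, sin θ)` under the
similarity `spiralRot t`, rotation by `t` composed with dilation by `exp t`. Its Jacobian is
`exp (2 t) * (√2 + cos θ sin θ) > 0` and its image is the punctured plane, so by the inverse
function theorem `f` is smooth off the origin (`contDiffAt_of_comp_spiral`).

Since `spiralRot s (M t θ) = M (s + t) θ`, the function is quasi-homogeneous:
`f ∘ spiralRot s = exp (s / τ) • f`. Differentiating `j` times and comparing with the compact
ellipse `t = 0` gives `‖D^j f(x)‖ ≤ C ‖x‖ ^ (1 / τ - j)` (`norm_iteratedFDeriv_le`). The exponent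
is positive for `j ≤ k < 1 / τ`, and exceeds `1` for `j < k`, so the derivatives extended by `0`
form a continuous Taylor series of `f` up to order `k`
(`contDiff_and_iteratedFDeriv_zero_of_bound`).
-/

open Real

open Filter Topology in
/-- Removable singularity for `C^k` regularity: if `f` is smooth off the origin and its `j`-th
derivative there is `O(‖x‖ ^ (a - j))` for all `j ≤ k`, where `k < a`, then `f` is `C^k` and flat to
order `k` at the origin. The iterated derivatives off the origin, extended by `0`, form a Taylor
series for `f`: at the origin the `j`-th one with `j < k` is `O(‖x‖ ^ (a - j))`, hence `o(‖x‖)`, so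
its derivative there is `0`. -/
theorem contDiff_and_iteratedFDeriv_zero_of_bound {E F : Type*} [NormedAddCommGroup E]
    [NormedSpace ℝ E] [NormedAddCommGroup F] [NormedSpace ℝ F] {f : E → F} {a : ℝ} {k : ℕ}
    (hk : (k : ℝ) < a) (hf0 : f 0 = 0)
    (hs : ∀ x, x ≠ 0 → ∀ n : ℕ, ContDiffAt ℝ n f x)
    (hb : ∀ j : ℕ, ∃ C : ℝ, j ≤ k → ∀ x, x ≠ 0 →
      ‖iteratedFDeriv ℝ j f x‖ ≤ C * ‖x‖ ^ (a - j)) :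
    ContDiff ℝ k f ∧ ∀ i : ℕ, i ≤ k → iteratedFDeriv ℝ i f 0 = 0 := by
  classical
  choose C hC using hb
  let p : E → FormalMultilinearSeries ℝ E F :=
    fun x j => if x = 0 then 0 else iteratedFDeriv ℝ j f x
  have p0 : ∀ j, p 0 j = 0 := fun j => if_pos rfl
  have pne : ∀ x, x ≠ 0 → ∀ j, p x j = iteratedFDeriv ℝ j f x := fun x hx j => if_neg hx
  have pev : ∀ x, x ≠ 0 → ∀ j, (fun y => p y j) =ᶠ[𝓝 x] iteratedFDeriv ℝ j f := fun x hx j => by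
    filter_upwards [isOpen_ne.mem_nhds hx] with y hy using pne y hy j
  have ptend : ∀ (c : ℝ) (b : ℝ), 0 < b → Tendsto (fun x : E => c * ‖x‖ ^ b) (𝓝 0) (𝓝 0) := by
    intro c b hb
    have h : ContinuousAt (fun x : E => c * ‖x‖ ^ b) 0 :=
      continuousAt_const.mul (continuous_norm.continuousAt.rpow_const (Or.inr hb.le))
    simpa [ContinuousAt, Real.zero_rpow hb.ne'] using h
  have hT : HasFTaylorSeriesUpTo k f p := by
    refine ⟨fun x => ?_, fun j hj x => ?_, fun j hj => continuous_iff_continuousAt.2 fun x => ?_⟩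
    · by_cases hx : x = 0
      · subst hx; rw [p0, hf0]; rfl
      · rw [pne x hx]; rfl
    · have hj' : j + 1 ≤ k := by exact_mod_cast hj
      have hjr : (j : ℝ) + 1 ≤ k := by exact_mod_cast hj'
      by_cases hx : x = 0
      · subst hx
        rw [p0]
        have : ContinuousMultilinearMap.curryLeft (0 : E [×(j+1)]→L[ℝ] F) = 0 := by
          ext; rfl
        rw [this, hasFDerivAt_iff_isLittleO_nhds_zero]
        refine Asymptotics.IsLittleO.of_bound fun c hc => ?_
        filter_upwards [(ptend (C j) (a - j - 1) (by linarith)).eventually_le_const hc] with y hy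
        by_cases hy0 : y = 0
        · simp [hy0]
        · have hyp : 0 < ‖y‖ := norm_pos_iff.2 hy0
          have h1 := hC j (by omega) y hy0
          have h2 : ‖y‖ ^ (a - j) = ‖y‖ ^ (a - j - 1) * ‖y‖ := by
            rw [Real.rpow_sub_one hyp.ne']; field_simp
          rw [h2, ← mul_assoc] at h1
          simp only [zero_add, p0, sub_zero, _root_.zero_apply, pne y hy0]
          exact h1.trans (by gcongr)
      · rw [pne x hx]
        refine HasFDerivAt.congr_of_eventuallyEq ?_ (pev x hx j)
        have hd : DifferentiableAt ℝ (iteratedFDeriv ℝ j f) x :=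
          ((hs x hx (1 + j)).iteratedFDeriv_right (m := 1) (by norm_cast)).differentiableAt
            one_ne_zero
        exact hd.hasFDerivAt
    · have hjk : j ≤ k := by exact_mod_cast hj
      have hjr : (j : ℝ) ≤ k := by exact_mod_cast hjk
      by_cases hx : x = 0
      · subst hx
        rw [ContinuousAt, p0]
        refine squeeze_zero_norm (fun y => ?_) (ptend |C j| (a - j) (by linarith))
        by_cases hy0 : y = 0
        · subst hy0; rw [p0, norm_zero]; positivity
        · rw [pne y hy0]
          exact (hC j hjk y hy0).trans (by gcongr; exact le_abs_self _)
      · refine ContinuousAt.congr ?_ (pev x hx j).symm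
        exact ((hs x hx (0 + j)).iteratedFDeriv_right (m := 0) (by norm_cast)).continuousAt
  refine ⟨hT.contDiff (n := (k : ℕ∞)), fun i hi => ?_⟩
  rw [← hT.eq_iteratedFDeriv (by exact_mod_cast hi), p0]

noncomputable def matMap (a b c d : ℝ) : ℝ × ℝ →L[ℝ] ℝ × ℝ :=
  (a • ContinuousLinearMap.fst ℝ ℝ ℝ + b • ContinuousLinearMap.snd ℝ ℝ ℝ).prod
    (c • ContinuousLinearMap.fst ℝ ℝ ℝ + d • ContinuousLinearMap.snd ℝ ℝ ℝ)

/-- The linear map of `ℝ × ℝ` with matrix rows `(a, b)` and `(c, d)`. -/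
theorem matMap_apply (a b c d : ℝ) (x : ℝ × ℝ) :
    matMap a b c d x = (a * x.1 + b * x.2, c * x.1 + d * x.2) := rfl

/-- `matMap a b c d` as a linear equivalence, when its determinant is nonzero. -/
noncomputable def matEquiv (a b c d : ℝ) (h : a * d - b * c ≠ 0) : (ℝ × ℝ) ≃L[ℝ] (ℝ × ℝ) :=
  ContinuousLinearEquiv.equivOfInverse (matMap a b c d)
    (matMap (d / (a * d - b * c)) (-b / (a * d - b * c))
      (-c / (a * d - b * c)) (a / (a * d - b * c)))
    (fun x => by
      have e := mul_inv_cancel₀ h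
      ext <;> simp only [matMap_apply]
      · linear_combination x.1 * e
      · linear_combination x.2 * e)
    (fun x => by
      have e := mul_inv_cancel₀ h
      ext <;> simp only [matMap_apply]
      · linear_combination x.1 * e
      · linear_combination x.2 * e)

/-- The map `M` in uncurried form: `(t, θ)` is sent to the point of parameter `θ` on the ellipse
`(√2 cos θ, sin θ)`, rotated by the angle `t` and dilated by `exp t`. -/
noncomputable def spiral (q : ℝ × ℝ) : ℝ × ℝ :=
  (exp q.1 * (√2 * cos q.1 * cos q.2 - sin q.1 * sin q.2),
   exp q.1 * (√2 * sin q.1 * cos q.2 + cos q.1 * sin q.2))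

/-- The Jacobian determinant of `spiral` is `exp (2 t) * (√2 + cos θ sin θ) > 0`. -/
theorem spiral_jacobian (t θ : ℝ) :
    (exp t * (√2 * cos t * cos θ - sin t * sin θ - √2 * sin t * cos θ - cos t * sin θ)) *
      (exp t * (-√2 * sin t * sin θ + cos t * cos θ)) -
    (exp t * (-√2 * cos t * sin θ - sin t * cos θ)) *
      (exp t * (√2 * sin t * cos θ + cos t * sin θ + √2 * cos t * cos θ - sin t * sin θ)) ≠ 0 := by
  have h2 : √2 ^ 2 = 2 := Real.sq_sqrt (by norm_num)
  have key : (exp t * (√2 * cos t * cos θ - sin t * sin θ - √2 * sin t * cos θ - cos t * sin θ)) *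
      (exp t * (-√2 * sin t * sin θ + cos t * cos θ)) -
    (exp t * (-√2 * cos t * sin θ - sin t * cos θ)) *
      (exp t * (√2 * sin t * cos θ + cos t * sin θ + √2 * cos t * cos θ - sin t * sin θ)) =
      exp t ^ 2 * (√2 + cos θ * sin θ) := by
    have e1 := sin_sq_add_cos_sq t
    have e2 := sin_sq_add_cos_sq θ
    linear_combination (exp t ^ 2 * (√2 * (sin θ ^2 + cos θ ^2) + (√2^2 - 1) * cos θ * sin θ)) * e1
      + exp t ^ 2 * √2 * e2 + exp t ^ 2 * cos θ * sin θ * h2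
  rw [key]
  have h1 : 1 ≤ √2 := Real.one_le_sqrt.2 (by norm_num)
  have : 0 < √2 + cos θ * sin θ := by
    nlinarith [sin_sq_add_cos_sq θ, sq_nonneg (cos θ + sin θ)]
  positivity

theorem spiral_contDiff {n : ℕ} : ContDiff ℝ n spiral := by
  unfold spiral; fun_prop

theorem spiral_hasFDerivAt (t θ : ℝ) :
    HasFDerivAt spiral (matEquiv _ _ _ _ (spiral_jacobian t θ) : ℝ × ℝ →L[ℝ] ℝ × ℝ) (t, θ) := by
  have h1 : HasFDerivAt (fun q : ℝ × ℝ => q.1) (ContinuousLinearMap.fst ℝ ℝ ℝ) (t, θ) :=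
    hasFDerivAt_fst
  have h2 : HasFDerivAt (fun q : ℝ × ℝ => q.2) (ContinuousLinearMap.snd ℝ ℝ ℝ) (t, θ) :=
    hasFDerivAt_snd
  have hA := h1.exp.mul (((h1.cos.const_mul √2).mul h2.cos).sub (h1.sin.mul h2.sin))
  have hB := h1.exp.mul (((h1.sin.const_mul √2).mul h2.cos).add (h1.cos.mul h2.sin))
  refine (hA.prodMk hB).congr_fderiv ?_
  apply ContinuousLinearMap.ext
  intro x
  change _ = matMap _ _ _ _ x
  rw [matMap_apply]
  ext <;> simp <;> ring

/-- `spiral` reaches every nonzero point `(u, v)`: undoing the rotation and dilation of parameter `t`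
gives a point whose quadratic form `p ^ 2 / 2 + q ^ 2` runs continuously over a range containing `1`,
so for some `t` it lies on the reference ellipse. -/
theorem exists_spiral_eq {x : ℝ × ℝ} (hx : x ≠ 0) : ∃ t θ, spiral (t, θ) = x := by
  obtain ⟨u, v⟩ := x
  have hr : 0 < u ^ 2 + v ^ 2 := by
    by_contra h
    apply hx
    have hu : u = 0 := by nlinarith [sq_nonneg u, sq_nonneg v]
    have hv : v = 0 := by nlinarith [sq_nonneg u, sq_nonneg v]
    simp [hu, hv]
  let g : ℝ → ℝ := fun t => exp (-(2 * t)) *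
    ((u * cos t + v * sin t) ^ 2 / 2 + (-u * sin t + v * cos t) ^ 2)
  have hg : Continuous g := by fun_prop
  have rot : ∀ t, (u * cos t + v * sin t) ^ 2 + (-u * sin t + v * cos t) ^ 2 = u ^ 2 + v ^ 2 :=
    fun t => by linear_combination (u ^ 2 + v ^ 2) * sin_sq_add_cos_sq t
  have hlo : ∃ t, g t ≤ 1 := by
    refine ⟨log (u ^ 2 + v ^ 2) / 2, ?_⟩
    simp only [g]
    rw [mul_div_cancel₀ _ two_ne_zero, exp_neg, exp_log hr, inv_mul_le_one₀ hr]
    nlinarith [rot (log (u ^ 2 + v ^ 2) / 2),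
      sq_nonneg (u * cos (log (u ^ 2 + v ^ 2) / 2) + v * sin (log (u ^ 2 + v ^ 2) / 2))]
  have hhi : ∃ t, 1 ≤ g t := by
    refine ⟨log ((u ^ 2 + v ^ 2) / 2) / 2, ?_⟩
    simp only [g]
    rw [mul_div_cancel₀ _ two_ne_zero, exp_neg, exp_log (by positivity),
      one_le_inv_mul₀ (by positivity)]
    nlinarith [rot (log ((u ^ 2 + v ^ 2) / 2) / 2),
      sq_nonneg (-u * sin (log ((u ^ 2 + v ^ 2) / 2) / 2) +
      v * cos (log ((u ^ 2 + v ^ 2) / 2) / 2))]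
  obtain ⟨t, ht⟩ := mem_range_of_exists_le_of_exists_ge hg hlo hhi
  have h2 : √2 ^ 2 = 2 := Real.sq_sqrt (by norm_num)
  have h2' : √2 ≠ 0 := by positivity
  let z : ℂ := ⟨exp (-t) * (u * cos t + v * sin t) / √2, exp (-t) * (-u * sin t + v * cos t)⟩
  have hz : ‖z‖ = 1 := by
    have : ‖z‖ ^ 2 = 1 := by
      rw [Complex.sq_norm, Complex.normSq_apply]
      simp only [z]
      rw [← ht]
      simp only [g]
      have : exp (-(2 * t)) = exp (-t) * exp (-t) := by rw [← exp_add]; ring_nf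
      rw [this]
      field_simp
      rw [h2]; ring
    nlinarith [norm_nonneg z]
  have hz0 : z ≠ 0 := by intro h; simp [h] at hz
  have hc : cos z.arg = exp (-t) * (u * cos t + v * sin t) / √2 := by
    rw [Complex.cos_arg hz0, hz, div_one]
  have hsn : sin z.arg = exp (-t) * (-u * sin t + v * cos t) := by
    rw [Complex.sin_arg, hz, div_one]
  have he : exp t * exp (-t) = 1 := by rw [← exp_add]; simp
  have hc' : √2 * cos z.arg = exp (-t) * (u * cos t + v * sin t) := by
    rw [hc]; field_simp
  refine ⟨t, z.arg, ?_⟩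
  have e1 := sin_sq_add_cos_sq t
  ext
  · simp only [spiral]
    linear_combination exp t * cos t * hc' - exp t * sin t * hsn +
      u * (sin t ^ 2 + cos t ^ 2) * he + u * e1
  · simp only [spiral]
    linear_combination exp t * sin t * hc' + exp t * cos t * hsn +
      v * (sin t ^ 2 + cos t ^ 2) * he + v * e1

open Topology in
/-- Off the origin, `f` is smooth: locally it is `exp (t / τ)` composed with a smooth local inverse
of `spiral`. -/
theorem contDiffAt_of_comp_spiral {f : ℝ × ℝ → ℝ} {τ : ℝ}
    (hf : ∀ q, f (spiral q) = exp (q.1 / τ)) {x : ℝ × ℝ} (hx : x ≠ 0) (n : ℕ) :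
    ContDiffAt ℝ n f x := by
  obtain ⟨t, θ, rfl⟩ := exists_spiral_eq hx
  have hc : ContDiffAt ℝ ((n + 1 : ℕ) : WithTop ℕ∞) spiral (t, θ) := spiral_contDiff.contDiffAt
  have hn : ((n + 1 : ℕ) : WithTop ℕ∞) ≠ 0 := by exact_mod_cast n.succ_ne_zero
  have hd := spiral_hasFDerivAt t θ
  have hinv := (hc.hasStrictFDerivAt' hd hn).eventually_right_inverse
  have hl : ContDiffAt ℝ n (hc.localInverse hd hn) (spiral (t, θ)) :=
    (hc.to_localInverse hd hn).of_le (by exact_mod_cast n.le_succ)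
  have hcomp : ContDiffAt ℝ n (fun y => exp ((hc.localInverse hd hn y).1 / τ))
      (spiral (t, θ)) := (hl.fst.div_const τ).exp
  refine hcomp.congr_of_eventuallyEq ?_
  filter_upwards [hinv] with y hy
  rw [← hf]
  exact congrArg f hy.symm

/-- The similarity of the plane which rotates by the angle `s` and dilates by `exp s`. -/
noncomputable def spiralRot (s : ℝ) : (ℝ × ℝ) ≃L[ℝ] (ℝ × ℝ) :=
  matEquiv (exp s * cos s) (-(exp s * sin s)) (exp s * sin s) (exp s * cos s) (by
    have : exp s * cos s * (exp s * cos s) - -(exp s * sin s) * (exp s * sin s) = exp s ^ 2 := by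
      linear_combination exp s ^ 2 * sin_sq_add_cos_sq s
    rw [this]; positivity)

theorem spiralRot_apply (s : ℝ) (x : ℝ × ℝ) : spiralRot s x =
    (exp s * cos s * x.1 + -(exp s * sin s) * x.2, exp s * sin s * x.1 + exp s * cos s * x.2) :=
  rfl

theorem spiralRot_spiral (s t θ : ℝ) : spiralRot s (spiral (t, θ)) = spiral (s + t, θ) := by
  rw [spiralRot_apply]
  ext <;> simp only [spiral, exp_add, cos_add, sin_add] <;> ring

/-- The factor `2` appears because `ℝ × ℝ` carries the sup norm. -/
theorem norm_spiralRot_le (s : ℝ) : ‖(spiralRot s : ℝ × ℝ →L[ℝ] ℝ × ℝ)‖ ≤ 2 * exp s := by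
  refine ContinuousLinearMap.opNorm_le_bound _ (by positivity) fun x => ?_
  have h1 : |x.1| ≤ ‖x‖ := norm_fst_le x
  have h2 : |x.2| ≤ ‖x‖ := norm_snd_le x
  have hb : ∀ p q : ℝ, |p| ≤ 1 → |q| ≤ 1 →
      |exp s * p * x.1 + exp s * q * x.2| ≤ 2 * exp s * ‖x‖ := by
    intro p q hp hq
    calc |exp s * p * x.1 + exp s * q * x.2|
        ≤ |exp s * p * x.1| + |exp s * q * x.2| := abs_add_le _ _
      _ = exp s * |p| * |x.1| + exp s * |q| * |x.2| := by simp [abs_mul]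
      _ ≤ exp s * 1 * ‖x‖ + exp s * 1 * ‖x‖ := by gcongr
      _ = _ := by ring
  have hs : |-sin s| ≤ 1 := by rw [abs_neg]; exact abs_sin_le_one s
  change ‖spiralRot s x‖ ≤ _
  rw [spiralRot_apply, Prod.norm_mk, max_le_iff]
  refine ⟨?_, hb _ _ (abs_sin_le_one s) (abs_cos_le_one s)⟩
  have := hb _ _ (abs_cos_le_one s) hs
  rwa [mul_neg] at this

/-- The reference ellipse lies in a compact annulus around the origin. -/
theorem norm_spiral_zero (θ : ℝ) : 1 / 2 ≤ ‖spiral (0, θ)‖ ∧ ‖spiral (0, θ)‖ ≤ 2 := by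
  have h : spiral (0, θ) = (√2 * cos θ, sin θ) := by simp [spiral]
  have h1 : 1 ≤ √2 := Real.one_le_sqrt.2 (by norm_num)
  have h2 : √2 ≤ 2 := Real.sqrt_le_iff.2 (by norm_num)
  rw [h, Prod.norm_mk, norm_mul, norm_eq_abs, norm_eq_abs, norm_eq_abs,
    abs_of_nonneg (by positivity : 0 ≤ √2)]
  constructor
  · by_contra! hlt
    rw [max_lt_iff] at hlt
    have hc : |cos θ| < 1 / 2 := by nlinarith [abs_nonneg (cos θ)]
    nlinarith [sin_sq_add_cos_sq θ, sq_abs (cos θ), sq_abs (sin θ), abs_nonneg (cos θ),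
      abs_nonneg (sin θ)]
  · refine max_le ?_ ((abs_sin_le_one θ).trans (by norm_num))
    nlinarith [abs_nonneg (cos θ), abs_cos_le_one θ]

/-- Quasi-homogeneity `f ∘ spiralRot s = exp (s / τ) • f` carries the bound on the `j`-th derivative
over the reference ellipse to every nonzero `x = spiral (t, θ)`, at the cost of a factor
`exp (t * (1 / τ - j))`, and `exp t ≤ 4 * ‖x‖`. -/
theorem norm_iteratedFDeriv_le {f : ℝ × ℝ → ℝ} {τ : ℝ} (hf0 : f 0 = 0)
    (hf : ∀ q, f (spiral q) = exp (q.1 / τ)) (j : ℕ) :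
    ∃ C : ℝ, (j : ℝ) ≤ 1 / τ → ∀ x, x ≠ 0 →
      ‖iteratedFDeriv ℝ j f x‖ ≤ C * ‖x‖ ^ (1 / τ - j) := by
  let K : Set (ℝ × ℝ) := Metric.closedBall 0 2 \ Metric.ball 0 (1 / 2)
  have hK : IsCompact K := (isCompact_closedBall _ _).diff Metric.isOpen_ball
  have hcont : ContinuousOn (iteratedFDeriv ℝ j f) K := by
    intro y hy
    have hy0 : y ≠ 0 := by
      rintro rfl
      exact hy.2 (Metric.mem_ball_self (by norm_num))
    exact ((contDiffAt_of_comp_spiral hf hy0 (0 + j)).iteratedFDeriv_right (m := 0)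
      (by norm_cast)).continuousAt.continuousWithinAt
  obtain ⟨B, hB⟩ := hK.exists_bound_of_continuousOn hcont
  have hscale : ∀ s x, f (spiralRot s x) = exp (s / τ) * f x := by
    intro s x
    by_cases hx : x = 0
    · simp [hx, hf0]
    · obtain ⟨t, θ, rfl⟩ := exists_spiral_eq hx
      rw [spiralRot_spiral, hf, hf, ← exp_add, add_div]
  refine ⟨B * 2 ^ j * 4 ^ (1 / τ - j), fun hj x hx => ?_⟩
  obtain ⟨t, θ, rfl⟩ := exists_spiral_eq hx
  have hfeq : f = exp (t / τ) • (f ∘ spiralRot (-t)) := by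
    funext y
    simp only [Pi.smul_apply, Function.comp_apply, hscale, smul_eq_mul]
    rw [← mul_assoc, ← exp_add, neg_div, add_neg_cancel, exp_zero, one_mul]
  have hL : spiralRot (-t) (spiral (t, θ)) = spiral (0, θ) := by
    rw [spiralRot_spiral, neg_add_cancel]
  obtain ⟨hlo, hhi⟩ := norm_spiral_zero θ
  have hmem : spiral (0, θ) ∈ K := by
    refine ⟨by simpa using hhi, by simpa using hlo⟩
  have hBn : ‖iteratedFDeriv ℝ j f (spiral (0, θ))‖ ≤ B := hB _ hmem
  have hB0 : 0 ≤ B := (norm_nonneg _).trans hBn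
  have hne : spiral (0, θ) ≠ 0 := by
    intro h; rw [h, norm_zero] at hlo; norm_num at hlo
  have hcomp : iteratedFDeriv ℝ j (f ∘ spiralRot (-t)) (spiral (t, θ)) =
      (iteratedFDeriv ℝ j f (spiral (0, θ))).compContinuousLinearMap
        fun _ => (spiralRot (-t) : ℝ × ℝ →L[ℝ] ℝ × ℝ) := by
    have := (spiralRot (-t)).iteratedFDerivWithin_comp_right f uniqueDiffOn_univ
      (Set.mem_univ (spiralRot (-t) (spiral (t, θ)))) j
    rwa [Set.preimage_univ, iteratedFDerivWithin_univ, iteratedFDerivWithin_univ, hL] at this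
  have hsm : ContDiffAt ℝ j (f ∘ spiralRot (-t)) (spiral (t, θ)) := by
    refine ContDiffAt.comp _ ?_ (spiralRot (-t)).contDiff.contDiffAt
    rw [hL]
    exact contDiffAt_of_comp_spiral hf hne j
  have hexp : exp t ≤ 4 * ‖spiral (t, θ)‖ := by
    have h1 := (spiralRot (-t) : ℝ × ℝ →L[ℝ] ℝ × ℝ).le_of_opNorm_le (norm_spiralRot_le (-t))
      (spiral (t, θ))
    change ‖spiralRot (-t) _‖ ≤ _ at h1
    rw [hL] at h1
    have he : exp t * exp (-t) = 1 := by rw [← exp_add]; simp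
    have h2 : exp t * (1 / 2) ≤ exp t * (2 * exp (-t) * ‖spiral (t, θ)‖) := by
      gcongr; exact hlo.trans h1
    have h3 : exp t * (2 * exp (-t) * ‖spiral (t, θ)‖) = 2 * ‖spiral (t, θ)‖ := by
      linear_combination 2 * ‖spiral (t, θ)‖ * he
    linarith
  have hD : iteratedFDeriv ℝ j f (spiral (t, θ)) =
      exp (t / τ) • iteratedFDeriv ℝ j (f ∘ spiralRot (-t)) (spiral (t, θ)) := by
    conv_lhs => rw [hfeq]
    exact iteratedFDeriv_const_smul_apply hsm
  calc ‖iteratedFDeriv ℝ j f (spiral (t, θ))‖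
      = exp (t / τ) * ‖iteratedFDeriv ℝ j (f ∘ spiralRot (-t)) (spiral (t, θ))‖ := by
        rw [hD, norm_smul, norm_of_nonneg (exp_pos _).le]
    _ ≤ exp (t / τ) * (B * (2 * exp (-t)) ^ j) := by
        gcongr
        rw [hcomp]
        refine (ContinuousMultilinearMap.norm_compContinuousLinearMap_le _ _).trans ?_
        rw [Finset.prod_const, Finset.card_fin]
        gcongr
        exact norm_spiralRot_le (-t)
    _ = B * 2 ^ j * exp t ^ (1 / τ - j) := by
        rw [mul_pow, ← exp_nat_mul, ← exp_mul]
        have : exp (t * (1 / τ - j)) = exp (t / τ) * exp (j * -t) := by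
          rw [← exp_add]; congr 1; ring
        rw [this]; ring
    _ ≤ B * 2 ^ j * (4 * ‖spiral (t, θ)‖) ^ (1 / τ - j) := by
        gcongr
    _ = _ := by rw [mul_rpow (by norm_num) (norm_nonneg _)]; ring

theorem constructed_function_Ck (τ : ℝ) (hτ : τ ∈ Set.Ioo (0:ℝ) (1/10))
    (M : ℝ → ℝ → ℝ × ℝ)
    (hM : ∀ t θ, M t θ =
      (Real.exp t * (Real.sqrt 2 * Real.cos t * Real.cos θ - Real.sin t * Real.sin θ),
       Real.exp t * (Real.sqrt 2 * Real.sin t * Real.cos θ + Real.cos t * Real.sin θ)))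
    (f : ℝ × ℝ → ℝ)
    (hf0 : f (0, 0) = 0)
    (hfM : ∀ t θ, f (M t θ) = Real.exp (t / τ))
    (k : ℕ) (hk : (k : ℝ) < 1 / τ) :
    ContDiff ℝ k f ∧ ∀ i : ℕ, i ≤ k → iteratedFDeriv ℝ i f (0, 0) = 0 := by
  have hfs : ∀ q, f (spiral q) = exp (q.1 / τ) := fun q => by
    rw [← hfM q.1 q.2, hM]; rfl
  refine contDiff_and_iteratedFDeriv_zero_of_bound (f := f) hk hf0
    (fun x hx n => contDiffAt_of_comp_spiral hfs hx n) fun j => ?_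
  obtain ⟨C, hC⟩ := norm_iteratedFDeriv_le hf0 hfs j
  exact ⟨C, fun hj => hC ((Nat.cast_le.2 hj).trans hk.le)⟩
end

section
/- Let τ ∈ (0, 1/10) and let f : ℝ² → ℝ be differentiable on ℝ² \ {(0,0)} and satisfy f(M(t,θ)) = exp(t/τ) for all (t,θ) ∈ ℝ². Then for all (t, θ) ∈ ℝ², (1/(τ(√2 + 1/2))) · e^{(1/τ − 1)t} ≤ ‖∇f(M(t,θ))‖ ≤ (√2/(τ(√2 − 1/2))) · e^{(1/τ − 1)t}. -/
open Real

/-!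
Write `R` for the rotation by `t` and `c = cos θ`, `s = sin θ`, so that `M t θ = e^t R (√2 c, s)`.
Differentiating `f (M t θ) = e^{t/τ}` in `θ` shows that `R⁻¹ ∇f` is orthogonal to `(-√2 s, c)`,
hence `R⁻¹ ∇f = l • (c, √2 s)` for some scalar `l`. Differentiating in `t` gives
`τ l (√2 + c s) = e^{(1/τ - 1) t}`. As `|c s| ≤ 1/2`, this bounds `l`, and
`‖∇f‖² = l² (c² + 2 s²)` lies between `l²` and `2 l²`.
-/

/-- Chain rule in coordinates for a real function along a plane curve. -/
lemma hasDerivAt_comp_plane_curve (f : EuclideanSpace ℝ (Fin 2) → ℝ) (x y : ℝ → ℝ)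
    (x' y' u : ℝ) (hx : HasDerivAt x x' u) (hy : HasDerivAt y y' u)
    (hf : DifferentiableAt ℝ f ((WithLp.equiv 2 (Fin 2 → ℝ)).symm ![x u, y u])) :
    HasDerivAt (fun v => f ((WithLp.equiv 2 (Fin 2 → ℝ)).symm ![x v, y v]))
      (gradient f ((WithLp.equiv 2 (Fin 2 → ℝ)).symm ![x u, y u]) 0 * x'
        + gradient f ((WithLp.equiv 2 (Fin 2 → ℝ)).symm ![x u, y u]) 1 * y') u := by
  have hc : HasDerivAt (fun v => (WithLp.equiv 2 (Fin 2 → ℝ)).symm ![x v, y v])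
      ((WithLp.equiv 2 (Fin 2 → ℝ)).symm ![x', y']) u := by
    have h : HasDerivAt (fun v => ![x v, y v]) ![x', y'] u := by
      rw [hasDerivAt_pi]
      intro i
      fin_cases i
      · simpa using hx
      · simpa using hy
    exact (PiLp.continuousLinearEquiv 2 ℝ
      (fun _ : Fin 2 => ℝ)).symm.toContinuousLinearMap.hasFDerivAt.comp_hasDerivAt u h
  have h := hf.hasGradientAt.hasFDerivAt.comp_hasDerivAt u hc
  refine h.congr_deriv ?_
  rw [InnerProductSpace.toDual_apply_apply, PiLp.inner_apply]
  simp [Fin.sum_univ_two, mul_comm]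

theorem constructed_function_gradient_norm_bounds (τ : ℝ) (hτ : τ ∈ Set.Ioo (0:ℝ) (1/10))
    (M : ℝ → ℝ → EuclideanSpace ℝ (Fin 2))
    (hM : ∀ t θ, M t θ = (WithLp.equiv 2 (Fin 2 → ℝ)).symm
      ![Real.exp t * (Real.sqrt 2 * Real.cos t * Real.cos θ - Real.sin t * Real.sin θ),
        Real.exp t * (Real.sqrt 2 * Real.sin t * Real.cos θ + Real.cos t * Real.sin θ)])
    (f : EuclideanSpace ℝ (Fin 2) → ℝ)
    (hdiff : ∀ p : EuclideanSpace ℝ (Fin 2), p ≠ 0 → DifferentiableAt ℝ f p)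
    (hfM : ∀ t θ, f (M t θ) = Real.exp (t / τ)) :
    ∀ t θ : ℝ,
      1 / (τ * (Real.sqrt 2 + 1 / 2)) * Real.exp ((1 / τ - 1) * t) ≤ ‖gradient f (M t θ)‖ ∧
      ‖gradient f (M t θ)‖ ≤ Real.sqrt 2 / (τ * (Real.sqrt 2 - 1 / 2)) * Real.exp ((1 / τ - 1) * t) := by
  intro t θ
  obtain ⟨hτ0, -⟩ := hτ
  have hcs := Real.sin_sq_add_cos_sq θ
  have hCS := Real.sin_sq_add_cos_sq t
  have hr : √2 ^ 2 = (2:ℝ) := Real.sq_sqrt (by norm_num)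
  have hr0 : (0:ℝ) < √2 := Real.sqrt_pos.mpr (by norm_num)
  have hr1 : (1:ℝ) < √2 := by nlinarith
  have he := Real.exp_pos t
  have hne : M t θ ≠ 0 := by
    intro h
    rw [hM] at h
    have h0 := congrArg (fun v : EuclideanSpace ℝ (Fin 2) => v 0) h
    have h1 := congrArg (fun v : EuclideanSpace ℝ (Fin 2) => v 1) h
    simp only [WithLp.equiv_symm_apply, PiLp.toLp_apply, PiLp.zero_apply, Matrix.cons_val_zero,
      Matrix.cons_val_one, mul_eq_zero, he.ne', false_or] at h0 h1
    have hc : √2 * cos θ = 0 := by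
      linear_combination cos t * h0 + sin t * h1 - √2 * cos θ * hCS
    have hs : sin θ = 0 := by
      linear_combination cos t * h1 - sin t * h0 - sin θ * hCS
    have hc' : cos θ = 0 := by simpa [hr0.ne'] using hc
    rw [hs, hc'] at hcs
    norm_num at hcs
  have hd := hdiff _ hne
  rw [hM] at hd
  have ht := hasDerivAt_comp_plane_curve f
    (fun t => exp t * (√2 * cos t * cos θ - sin t * sin θ))
    (fun t => exp t * (√2 * sin t * cos θ + cos t * sin θ)) _ _ t
    ((Real.hasDerivAt_exp t).mul ((((Real.hasDerivAt_cos t).const_mul (√2)).mul_const (cos θ)).sub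
      ((Real.hasDerivAt_sin t).mul_const (sin θ))))
    ((Real.hasDerivAt_exp t).mul ((((Real.hasDerivAt_sin t).const_mul (√2)).mul_const (cos θ)).add
      ((Real.hasDerivAt_cos t).mul_const (sin θ)))) hd
  have hθ := hasDerivAt_comp_plane_curve f
    (fun θ => exp t * (√2 * cos t * cos θ - sin t * sin θ))
    (fun θ => exp t * (√2 * sin t * cos θ + cos t * sin θ)) _ _ θ
    ((((Real.hasDerivAt_cos θ).const_mul (√2 * cos t)).sub
      ((Real.hasDerivAt_sin θ).const_mul (sin t))).const_mul (exp t))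
    ((((Real.hasDerivAt_cos θ).const_mul (√2 * sin t)).add
      ((Real.hasDerivAt_sin θ).const_mul (cos t))).const_mul (exp t)) hd
  simp only [← hM, hfM] at ht hθ
  have et := ht.unique (((hasDerivAt_id t).div_const τ).exp)
  have eθ := hθ.unique (hasDerivAt_const θ _)
  have hnorm : ‖gradient f (M t θ)‖ ^ 2
      = gradient f (M t θ) 0 ^ 2 + gradient f (M t θ) 1 ^ 2 := by
    rw [EuclideanSpace.norm_sq_eq]
    simp [Fin.sum_univ_two]
  have hn0 := norm_nonneg (gradient f (M t θ))
  generalize ‖gradient f (M t θ)‖ = n at *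
  generalize gradient f (M t θ) 0 = g0 at *
  generalize gradient f (M t θ) 1 = g1 at *
  have hexp : exp (t / τ) = exp t * exp ((1 / τ - 1) * t) := by
    rw [← Real.exp_add]; congr 1; ring
  have hK := Real.exp_pos ((1 / τ - 1) * t)
  simp only [id] at et
  rw [hexp] at et
  generalize exp ((1 / τ - 1) * t) = K at *
  -- coordinates of the gradient in the frame rotated by `t`
  obtain ⟨a, ha⟩ : ∃ a, a = g0 * cos t + g1 * sin t := ⟨_, rfl⟩
  obtain ⟨b, hb⟩ : ∃ b, b = g1 * cos t - g0 * sin t := ⟨_, rfl⟩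
  have e1 : -√2 * sin θ * a + cos θ * b = 0 := by
    apply mul_left_cancel₀ he.ne'
    rw [ha, hb]
    linear_combination eθ
  have e2 : τ * (a * (√2 * cos θ - sin θ) + b * (sin θ + √2 * cos θ)) = K := by
    apply mul_left_cancel₀ he.ne'
    rw [ha, hb]
    field_simp at et
    linear_combination exp t * et
  have e3 : n ^ 2 = a ^ 2 + b ^ 2 := by
    rw [hnorm, ha, hb]; linear_combination -(g0 ^ 2 + g1 ^ 2) * hCS
  obtain ⟨l, hl⟩ : ∃ l, l = cos θ * a + √2 / 2 * sin θ * b := ⟨_, rfl⟩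
  have hal : a = l * cos θ := by
    rw [hl]
    linear_combination -a * hcs - √2 / 2 * sin θ * e1 - sin θ ^ 2 * a / 2 * hr
  have hbl : b = √2 * l * sin θ := by
    rw [hl]
    linear_combination -b * hcs + cos θ * e1 - sin θ ^ 2 * b / 2 * hr
  have e4 : τ * l * (√2 + cos θ * sin θ) = K := by
    rw [← e2, hal, hbl]
    linear_combination -τ * l * √2 * hcs - τ * l * cos θ * sin θ * hr
  have e5 : n ^ 2 = l ^ 2 * (1 + sin θ ^ 2) := by
    rw [e3, hal, hbl]
    linear_combination l ^ 2 * hcs + l ^ 2 * sin θ ^ 2 * hr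
  have hu : cos θ * sin θ ≤ 1 / 2 := by linarith [sq_nonneg (cos θ - sin θ)]
  have hv : -(1 / 2) ≤ cos θ * sin θ := by linarith [sq_nonneg (cos θ + sin θ)]
  have hlpos : 0 < τ * l := by
    by_contra h
    have := mul_nonpos_of_nonpos_of_nonneg (not_lt.mp h)
      (by linarith : 0 ≤ √2 + cos θ * sin θ)
    linarith
  have hl0 : 0 < l := pos_of_mul_pos_right hlpos hτ0.le
  have hln : l ≤ n := by
    apply le_of_sq_le_sq _ hn0
    linarith [mul_nonneg (sq_nonneg l) (sq_nonneg (sin θ))]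
  have hnl : n ≤ √2 * l := by
    apply le_of_sq_le_sq _ (by positivity)
    rw [mul_pow, hr, e5, mul_comm 2]
    exact mul_le_mul_of_nonneg_left (by linarith [sq_nonneg (cos θ)]) (sq_nonneg l)
  have hd2 : 0 < √2 - 1 / 2 := by linarith
  constructor
  · refine le_trans ?_ hln
    rw [div_mul_eq_mul_div, div_le_iff₀ (by positivity)]
    linarith [mul_nonneg hlpos.le (sub_nonneg.mpr hu)]
  · refine hnl.trans ?_
    rw [div_mul_eq_mul_div, le_div_iff₀ (by positivity)]
    have : τ * l * (√2 - 1 / 2) ≤ K := by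
      linarith [mul_nonneg hlpos.le (by linarith : 0 ≤ cos θ * sin θ + 1 / 2)]
    linarith [mul_le_mul_of_nonneg_left this hr0.le]
end
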